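/- There is a constant C, depending only on d, n, C₀ and β_d, such that for every g ∈ RBMO(μ): ‖g‖_* ≤ C · sup { |∫ f·g dμ| : f an atomic block with |f|_{H^{1,∞}_atb(μ)} ≤ 1 }. Consequently, the norm of the linear functional L_g(f) = ∫ f·g dμ on H^{1,∞}_atb(μ) is comparable to ‖g‖_*. -/

import Mathlib

/-!
Common definitions for formalizing Tolsa, "BMO, H¹, and Calderón–Zygmund
operators for non doubling measures".
-/

open MeasureTheory Metric Set Function
open scoped Classical
open scoped ENNReal NNReal BigOperators

noncomputable section

/-- `ℝ^d` with the Euclidean metric. -/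
abbrev Euc (d : ℕ) := EuclideanSpace ℝ (Fin d)

variable {d : ℕ}

/-- The support of a measure: points all of whose balls have positive measure. -/
def measSupp (μ : MeasureTheory.Measure (Euc d)) : Set (Euc d) :=
  {x | ∀ r : ℝ, 0 < r → 0 < μ (Metric.ball x r)}

/-- The growth condition `μ(B(x,r)) ≤ C₀ rⁿ`. -/
def GrowthBound (μ : MeasureTheory.Measure (Euc d)) (n : ℕ) (C₀ : ℝ) : Prop :=
  ∀ (x : Euc d) (r : ℝ), 0 < r → μ (Metric.ball x r) ≤ ENNReal.ofReal (C₀ * r ^ n)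

/-- A (closed, axis-parallel) cube with center in the support of `μ` and positive
side length. -/
structure CubeOf (μ : MeasureTheory.Measure (Euc d)) where
  c : Euc d
  ℓ : ℝ
  ℓ_pos : 0 < ℓ
  c_mem : c ∈ measSupp μ

namespace CubeOf

variable {μ : MeasureTheory.Measure (Euc d)}

/-- The set of points of a cube. -/
def set (Q : CubeOf μ) : Set (Euc d) := {y | ∀ i, |y i - Q.c i| ≤ Q.ℓ / 2}

/-- The concentric dilation `aQ` of a cube, as a set. -/
def dil (Q : CubeOf μ) (a : ℝ) : Set (Euc d) := {y | ∀ i, |y i - Q.c i| ≤ a * Q.ℓ / 2}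

/-- The cube `2^k Q`. -/
def pow2 (Q : CubeOf μ) (k : ℕ) : CubeOf μ :=
  ⟨Q.c, 2 ^ k * Q.ℓ, mul_pos (by positivity) Q.ℓ_pos, Q.c_mem⟩

/-- The cube `6^k Q`. -/
def pow6 (Q : CubeOf μ) (k : ℕ) : CubeOf μ :=
  ⟨Q.c, 6 ^ k * Q.ℓ, mul_pos (by positivity) Q.ℓ_pos, Q.c_mem⟩

end CubeOf

/-- `(α,β)`-doubling cube: `μ(αQ) ≤ β μ(Q)`. -/
def IsDoubling (μ : MeasureTheory.Measure (Euc d)) (α β : ℝ) (Q : CubeOf μ) : Prop :=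
  μ (Q.dil α) ≤ ENNReal.ofReal β * μ Q.set

/-- `N_{Q,R}`: the first integer `k ≥ 1` such that `l(2^k Q) ≥ l(R)`. -/
def NQR {μ : MeasureTheory.Measure (Euc d)} (Q R : CubeOf μ) : ℕ :=
  sInf {k : ℕ | 1 ≤ k ∧ R.ℓ ≤ 2 ^ k * Q.ℓ}

/-- The coefficient `K_{Q,R} = 1 + ∑_{k=1}^{N_{Q,R}} μ(2^k Q)/l(2^k Q)^n`. -/
def Kcoef {μ : MeasureTheory.Measure (Euc d)} (n : ℕ) (Q R : CubeOf μ) : ℝ :=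
  1 + ∑ k ∈ Finset.Icc 1 (NQR Q R), (μ ((Q.pow2 k).set)).toReal / ((2 ^ k * Q.ℓ) ^ n)

/-- The smallest `N ≥ 0` such that `2^N Q` is `(2,βd)`-doubling. -/
def tildeIdx (μ : MeasureTheory.Measure (Euc d)) (βd : ℝ) (Q : CubeOf μ) : ℕ :=
  sInf {N : ℕ | IsDoubling μ 2 βd (Q.pow2 N)}

/-- The cube `Q̃`: the smallest cube `2^N Q`, `N ≥ 0`, which is `(2,βd)`-doubling. -/
def CubeOf.tilde {μ : MeasureTheory.Measure (Euc d)} (Q : CubeOf μ) (βd : ℝ) : CubeOf μ :=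
  Q.pow2 (tildeIdx μ βd Q)

/-- The mean `m_Q f` of `f` over the cube `Q` with respect to `μ`. -/
def mQ (μ : MeasureTheory.Measure (Euc d)) (Q : CubeOf μ) (f : Euc d → ℝ) : ℝ :=
  ⨍ x in Q.set, f x ∂μ

/-- For `μ`-a.e. `x` there are `(2,βd)`-doubling cubes centered at `x` of arbitrarily
small side length. -/
def SmallDoublingAE (μ : MeasureTheory.Measure (Euc d)) (βd : ℝ) : Prop :=
  ∀ᵐ x ∂μ, ∀ ℓ₀ : ℝ, 0 < ℓ₀ → ∃ Q : CubeOf μ, Q.c = x ∧ Q.ℓ < ℓ₀ ∧ IsDoubling μ 2 βd Q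

/-- `C` is an admissible constant in the definition of the `RBMO(μ)` norm of `f`. -/
def RBMOBoundWith (μ : MeasureTheory.Measure (Euc d)) (n : ℕ) (βd : ℝ)
    (f : Euc d → ℝ) (C : ℝ≥0∞) : Prop :=
  (∀ Q : CubeOf μ,
    ∫⁻ x in Q.set, ENNReal.ofReal |f x - mQ μ (Q.tilde βd) f| ∂μ ≤ C * μ (Q.dil 2)) ∧
  (∀ Q R : CubeOf μ, Q.set ⊆ R.set → IsDoubling μ 2 βd Q → IsDoubling μ 2 βd R →
    ENNReal.ofReal |mQ μ Q f - mQ μ R f| ≤ C * ENNReal.ofReal (Kcoef n Q R))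

/-- The `RBMO(μ)` norm `‖f‖_*` (with value `∞` if `f ∉ RBMO(μ)`). -/
def rbmoNorm (μ : MeasureTheory.Measure (Euc d)) (n : ℕ) (βd : ℝ) (f : Euc d → ℝ) : ℝ≥0∞ :=
  sInf {C | RBMOBoundWith μ n βd f C}

/-- The conditions defining `‖f‖_{**,(ρ)}`, for a given family of numbers `fQ`. -/
def StarStarBoundWith (μ : MeasureTheory.Measure (Euc d)) (n : ℕ) (ρ : ℝ)
    (f : Euc d → ℝ) (fQ : CubeOf μ → ℝ) (C : ℝ≥0∞) : Prop :=
  (∀ Q : CubeOf μ, ∫⁻ x in Q.set, ENNReal.ofReal |f x - fQ Q| ∂μ ≤ C * μ (Q.dil ρ)) ∧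
  (∀ Q R : CubeOf μ, Q.set ⊆ R.set →
    ENNReal.ofReal |fQ Q - fQ R| ≤ C * ENNReal.ofReal (Kcoef n Q R))

/-- The norm `‖f‖_{**,(ρ)}`. -/
def starStarNorm (μ : MeasureTheory.Measure (Euc d)) (n : ℕ) (ρ : ℝ) (f : Euc d → ℝ) : ℝ≥0∞ :=
  sInf {C | ∃ fQ : CubeOf μ → ℝ, StarStarBoundWith μ n ρ f fQ C}

end

noncomputable section

variable {d : ℕ}

/-- The conditions defining the `RBMO^p(μ)` norm. -/
def RBMOpBoundWith (μ : MeasureTheory.Measure (Euc d)) (n : ℕ) (βd : ℝ) (p : ℝ)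
    (f : Euc d → ℝ) (C : ℝ≥0∞) : Prop :=
  (∀ Q : CubeOf μ,
    ∫⁻ x in Q.set, ENNReal.ofReal |f x - mQ μ (Q.tilde βd) f| ^ p ∂μ ≤ C ^ p * μ (Q.dil 2)) ∧
  (∀ Q R : CubeOf μ, Q.set ⊆ R.set → IsDoubling μ 2 βd Q → IsDoubling μ 2 βd R →
    ENNReal.ofReal |mQ μ Q f - mQ μ R f| ≤ C * ENNReal.ofReal (Kcoef n Q R))

/-- The `RBMO^p(μ)` norm `‖f‖_{*,p}`. -/
def rbmoPNorm (μ : MeasureTheory.Measure (Euc d)) (n : ℕ) (βd : ℝ) (p : ℝ)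
    (f : Euc d → ℝ) : ℝ≥0∞ :=
  sInf {C | RBMOpBoundWith μ n βd p f C}

/-- Condition (b) of Lemma `fifi` of the paper, with constant `Cb`. -/
def CondB (μ : MeasureTheory.Measure (Euc d)) (n : ℕ) (ρ : ℝ)
    (f : Euc d → ℝ) (Cb : ℝ≥0∞) : Prop :=
  (∀ Q : CubeOf μ, ∫⁻ x in Q.set, ENNReal.ofReal |f x - mQ μ Q f| ∂μ ≤ Cb * μ (Q.dil ρ)) ∧
  (∀ Q R : CubeOf μ, Q.set ⊆ R.set →
    ENNReal.ofReal |mQ μ Q f - mQ μ R f| ≤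
      Cb * ENNReal.ofReal (Kcoef n Q R) * (μ (Q.dil ρ) / μ Q.set + μ (R.dil ρ) / μ R.set))

/-- Condition (c) of Lemma `fifi` of the paper, with constant `Cc`. -/
def CondC (μ : MeasureTheory.Measure (Euc d)) (n : ℕ) (βd : ℝ)
    (f : Euc d → ℝ) (Cc : ℝ≥0∞) : Prop :=
  (∀ Q : CubeOf μ, IsDoubling μ 2 βd Q →
    ∫⁻ x in Q.set, ENNReal.ofReal |f x - mQ μ Q f| ∂μ ≤ Cc * μ Q.set) ∧
  (∀ Q R : CubeOf μ, Q.set ⊆ R.set → IsDoubling μ 2 βd Q → IsDoubling μ 2 βd R →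
    ENNReal.ofReal |mQ μ Q f - mQ μ R f| ≤ Cc * ENNReal.ofReal (Kcoef n Q R))

/-- The conditions defining the norm `‖f‖_∘`, relative to a choice `αQ` of minimizers. -/
def CircBoundWith (μ : MeasureTheory.Measure (Euc d)) (n : ℕ) (βd : ℝ)
    (f : Euc d → ℝ) (αQ : CubeOf μ → ℝ) (C : ℝ≥0∞) : Prop :=
  (∀ Q : CubeOf μ,
    ∫⁻ x in Q.set, ENNReal.ofReal |f x - αQ (Q.tilde βd)| ∂μ ≤ C * μ (Q.dil 2)) ∧
  (∀ Q R : CubeOf μ, Q.set ⊆ R.set → IsDoubling μ 2 βd Q → IsDoubling μ 2 βd R →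
    ENNReal.ofReal |αQ Q - αQ R| ≤ C * ENNReal.ofReal (Kcoef n Q R))

/-- The norm `‖f‖_∘`, relative to a choice `αQ` of minimizers. -/
def circNorm (μ : MeasureTheory.Measure (Euc d)) (n : ℕ) (βd : ℝ)
    (f : Euc d → ℝ) (αQ : CubeOf μ → ℝ) : ℝ≥0∞ :=
  sInf {C | CircBoundWith μ n βd f αQ C}

/-- An atomic block: a function supported on a cube `R`, with zero integral, of the
form `b = ∑ λⱼ aⱼ` with `aⱼ` supported on cubes `Qⱼ ⊆ R` and
`‖aⱼ‖_{L∞(μ)} ≤ (μ(2Qⱼ) K_{Qⱼ,R})⁻¹`. -/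
structure AtomicBlock (μ : MeasureTheory.Measure (Euc d)) (n : ℕ) where
  b : Euc d → ℝ
  R : CubeOf μ
  lam : ℕ → ℝ
  a : ℕ → Euc d → ℝ
  Qj : ℕ → CubeOf μ
  integrable : MeasureTheory.Integrable b μ
  supp_b : ∀ x ∉ R.set, b x = 0
  int_zero : ∫ x, b x ∂μ = 0
  Qj_sub : ∀ j, (Qj j).set ⊆ R.set
  a_supp : ∀ j, ∀ x ∉ (Qj j).set, a j x = 0
  a_meas : ∀ j, MeasureTheory.AEStronglyMeasurable (a j) μ
  a_bound : ∀ j, MeasureTheory.eLpNorm (a j) ⊤ μ ≤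
    (μ ((Qj j).dil 2) * ENNReal.ofReal (Kcoef n (Qj j) R))⁻¹
  lam_summable : Summable fun j => |lam j|
  b_eq : ∀ᵐ x ∂μ, HasSum (fun j => lam j * a j x) (b x)

/-- `|b|_{H^{1,∞}_atb(μ)} = ∑ⱼ |λⱼ|` for the given decomposition. -/
def AtomicBlock.size {μ : MeasureTheory.Measure (Euc d)} {n : ℕ}
    (B : AtomicBlock μ n) : ℝ :=
  ∑' j, |B.lam j|

/-- The `H^{1,∞}_atb(μ)` norm (with value `∞` outside the space). -/
def hatbNorm (μ : MeasureTheory.Measure (Euc d)) (n : ℕ) (f : Euc d → ℝ) : ℝ≥0∞ :=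
  sInf {t : ℝ≥0∞ | ∃ B : ℕ → AtomicBlock μ n,
    (∀ᵐ x ∂μ, HasSum (fun i => (B i).b x) (f x)) ∧
    t = ∑' i, ENNReal.ofReal ((B i).size)}

/-- A `p`-atomic block: like an atomic block, but with the size condition
`‖aⱼ‖_{L^p(μ)} ≤ μ(2Qⱼ)^{1/p-1} K_{Qⱼ,R}⁻¹`. -/
structure PAtomicBlock (μ : MeasureTheory.Measure (Euc d)) (n : ℕ) (p : ℝ) where
  b : Euc d → ℝ
  R : CubeOf μ
  lam : ℕ → ℝ
  a : ℕ → Euc d → ℝ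
  Qj : ℕ → CubeOf μ
  integrable : MeasureTheory.Integrable b μ
  supp_b : ∀ x ∉ R.set, b x = 0
  int_zero : ∫ x, b x ∂μ = 0
  Qj_sub : ∀ j, (Qj j).set ⊆ R.set
  a_supp : ∀ j, ∀ x ∉ (Qj j).set, a j x = 0
  a_meas : ∀ j, MeasureTheory.AEStronglyMeasurable (a j) μ
  a_bound : ∀ j, MeasureTheory.eLpNorm (a j) (ENNReal.ofReal p) μ ≤
    μ ((Qj j).dil 2) ^ (1 / p - 1) * (ENNReal.ofReal (Kcoef n (Qj j) R))⁻¹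
  lam_summable : Summable fun j => |lam j|
  b_eq : ∀ᵐ x ∂μ, HasSum (fun j => lam j * a j x) (b x)

/-- `|b|_{H^{1,p}_atb(μ)} = ∑ⱼ |λⱼ|` for the given decomposition. -/
def PAtomicBlock.size {μ : MeasureTheory.Measure (Euc d)} {n : ℕ} {p : ℝ}
    (B : PAtomicBlock μ n p) : ℝ :=
  ∑' j, |B.lam j|

/-- The `H^{1,p}_atb(μ)` norm (with value `∞` outside the space). -/
def hatbPNorm (μ : MeasureTheory.Measure (Euc d)) (n : ℕ) (p : ℝ) (f : Euc d → ℝ) : ℝ≥0∞ :=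
  sInf {t : ℝ≥0∞ | ∃ B : ℕ → PAtomicBlock μ n p,
    (∀ᵐ x ∂μ, HasSum (fun i => (B i).b x) (f x)) ∧
    t = ∑' i, ENNReal.ofReal ((B i).size)}

/-- A Calderón–Zygmund kernel of dimension `n`, with constant `Ck` and Hölder
exponent `δ`. -/
def CZKernelBound (n : ℕ) (k : Euc d → Euc d → ℝ) (Ck δ : ℝ) : Prop :=
  (∀ x y : Euc d, x ≠ y → |k x y| ≤ Ck / dist x y ^ (n : ℝ)) ∧
  (∀ x x' y : Euc d, x ≠ y → dist x x' ≤ dist x y / 2 →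
    |k x y - k x' y| + |k y x - k y x'| ≤ Ck * dist x x' ^ δ / dist x y ^ ((n : ℝ) + δ))

/-- The truncated operator `T_ε f(x) = ∫_{|x-y|>ε} k(x,y) f(y) dμ(y)`. -/
def trunc (μ : MeasureTheory.Measure (Euc d)) (k : Euc d → Euc d → ℝ) (ε : ℝ)
    (f : Euc d → ℝ) (x : Euc d) : ℝ :=
  ∫ y in {y | ε < dist x y}, k x y * f y ∂μ

/-- The non-centered doubling maximal operator `N`. -/
def Nop (μ : MeasureTheory.Measure (Euc d)) (βd : ℝ) (f : Euc d → ℝ) (x : Euc d) : ℝ≥0∞ :=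
  ⨆ (Q : CubeOf μ) (_ : x ∈ Q.set) (_ : IsDoubling μ 2 βd Q),
    (∫⁻ y in Q.set, ENNReal.ofReal |f y| ∂μ) / μ Q.set

/-- The sharp maximal operator `M^♯`. -/
def Msharp (μ : MeasureTheory.Measure (Euc d)) (n : ℕ) (βd : ℝ)
    (f : Euc d → ℝ) (x : Euc d) : ℝ≥0∞ :=
  (⨆ (Q : CubeOf μ) (_ : x ∈ Q.set),
    (∫⁻ y in Q.set, ENNReal.ofReal |f y - mQ μ (Q.tilde βd) f| ∂μ) / μ (Q.dil (3/2))) +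
  ⨆ (Q : CubeOf μ) (R : CubeOf μ) (_ : x ∈ Q.set) (_ : Q.set ⊆ R.set)
      (_ : IsDoubling μ 2 βd Q) (_ : IsDoubling μ 2 βd R),
    ENNReal.ofReal (|mQ μ Q f - mQ μ R f| / Kcoef n Q R)

/-- The weight functions `w_i = χ_{Q_i} / ∑_k χ_{Q_k}` of the Calderón–Zygmund
decomposition. -/
def czWeight {μ : MeasureTheory.Measure (Euc d)} (J : Finset ℕ) (Q : ℕ → CubeOf μ)
    (i : ℕ) (x : Euc d) : ℝ :=
  Set.indicator (Q i).set
    (fun y => (((J.filter fun kk => y ∈ (Q kk).set).card : ℝ))⁻¹) x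

/-- The smallest `(6,6^{n+1})`-doubling cube of the form `6^k Q`, `k ≥ 1`. -/
def smallest6Doubling (μ : MeasureTheory.Measure (Euc d)) (n : ℕ) (Q : CubeOf μ) : CubeOf μ :=
  Q.pow6 (sInf {k : ℕ | 1 ≤ k ∧ IsDoubling μ 6 (6 ^ (n + 1)) (Q.pow6 k)})

end

/-!
For `Q ⊆ R` with `R` doubling, let `φ` be the sign of `g - m_R g` on `Q`. Then
`φ - 1_R · μ(R)⁻¹ ∫ φ dμ` is an atomic block of size `≲ μ(2Q) K_{Q,R}`, and pairing it with `g`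
gives exactly `∫_Q |g - m_R g| dμ`. Taking `R = Q̃`, or `Q` doubling, bounds both parts of `‖g‖_*`
by the norm of `L_g`.

Conversely, a block `b` supported in `R` has integral zero, so `∫ b g dμ = ∫ b (g - m_{R̃} g) dμ`,
and an atom supported in `Q ⊆ R` sees at most `∫_Q |g - m_{Q̃} g| dμ` and
`μ(Q) |m_{Q̃} g - m_{R̃} g|`, weighted by `(μ(2Q) K_{Q,R})⁻¹`. The two means are compared through
a doubling dilate `P` of `R` containing `Q̃` and `R̃`, for which `K_{Q̃,P} + K_{R̃,P} ≲ K_{Q,R}`: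
along `Q, 2Q, …, Q̃` the densities `μ(2^k Q) / l(2^k Q)^n` grow geometrically and are bounded by
the growth condition, so their sum is bounded.
-/

section Preliminaries

theorem sub_mul_sum_range_succ_le {K : Type*} [CommRing K] [LinearOrder K]
    [IsStrictOrderedRing K] {p q : K} {u : ℕ → K} (hp : 0 ≤ p) (h0 : 0 ≤ u 0) {t : ℕ}
    (h : ∀ i < t, q * u i ≤ p * u (i + 1)) :
    (q - p) * ∑ i ∈ Finset.range (t + 1), u i ≤ q * u t := by
  induction t with
  | zero =>
    rw [zero_add, Finset.sum_range_one]
    linarith [mul_nonneg hp h0]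
  | succ t ih =>
    rw [Finset.sum_range_succ, mul_add]
    linarith [ih fun i hi => h i (by omega), h t (by omega)]

variable {M : Type*} [AddCommMonoid M] [PartialOrder M] [IsOrderedAddMonoid M] {u : ℕ → M}

theorem sum_range_add_left_le (hu : ∀ i, 0 ≤ u i) {a k l : ℕ} (h : a + k ≤ l) :
    ∑ i ∈ Finset.range k, u (a + i) ≤ ∑ i ∈ Finset.range l, u i :=
  calc ∑ i ∈ Finset.range k, u (a + i)
    _ ≤ ∑ i ∈ Finset.range (a + k), u i := by
      rw [Finset.sum_range_add]
      exact le_add_of_nonneg_left (Finset.sum_nonneg fun i _ => hu i)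
    _ ≤ ∑ i ∈ Finset.range l, u i :=
      Finset.sum_le_sum_of_subset_of_nonneg (Finset.range_mono h) fun i _ _ => hu i

theorem sum_range_max_le_add (hu : ∀ i, 0 ≤ u i) (a b : ℕ) :
    ∑ i ∈ Finset.range (max a b), u i ≤
      ∑ i ∈ Finset.range a, u i + ∑ i ∈ Finset.range b, u i := by
  have hnonneg : ∀ k, 0 ≤ ∑ i ∈ Finset.range k, u i := fun k => Finset.sum_nonneg fun i _ => hu i
  rcases le_total a b with h | h
  · rw [max_eq_right h]
    exact le_add_of_nonneg_left (hnonneg a)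
  · rw [max_eq_left h]
    exact le_add_of_nonneg_right (hnonneg b)

theorem hasSum_of_forall_add_two_eq_zero {A : Type*} [AddCommMonoid A] [TopologicalSpace A]
    {f : ℕ → A} (h : ∀ j, f (j + 2) = 0) : HasSum f (f 0 + f 1) := by
  have hsum : HasSum f (∑ j ∈ Finset.range 2, f j) :=
    hasSum_sum_of_ne_finset_zero fun j hj => by
      obtain ⟨k, rfl⟩ := Nat.exists_eq_add_of_le' (not_lt.1 (Finset.mem_range.not.1 hj))
      exact h k
  rwa [Finset.sum_range_succ, Finset.sum_range_one] at hsum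

theorem ofReal_abs_sub_le (a b c : ℝ) :
    ENNReal.ofReal |a - c| ≤ ENNReal.ofReal |a - b| + ENNReal.ofReal |b - c| := by
  simpa only [edist_dist, Real.dist_eq] using edist_triangle a b c

variable {α : Type*} [MeasurableSpace α] {ν : Measure α} {s : Set α}

theorem enorm_setAverage_sub_mul_le {E : Type*} [NormedAddCommGroup E] [NormedSpace ℝ E]
    [CompleteSpace E] {f : α → E} (hs : ν s ≠ ⊤) (hf : IntegrableOn f s ν) (c : E) :
    ‖(⨍ x in s, f x ∂ν) - c‖ₑ * ν s ≤ ∫⁻ x in s, ‖f x - c‖ₑ ∂ν := by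
  have hintegral : ∫ x in s, (f x - c) ∂ν = ν.real s • ((⨍ x in s, f x ∂ν) - c) := by
    rw [integral_sub hf (integrableOn_const hs), setIntegral_const, smul_sub,
      measure_smul_setAverage _ hs]
  calc ‖(⨍ x in s, f x ∂ν) - c‖ₑ * ν s = ‖∫ x in s, (f x - c) ∂ν‖ₑ := by
        rw [hintegral, enorm_smul, Real.enorm_eq_ofReal measureReal_nonneg,
          ofReal_measureReal hs, mul_comm]
    _ ≤ ∫⁻ x in s, ‖f x - c‖ₑ ∂ν := enorm_integral_le_lintegral_enorm _

theorem integrable_mul_of_eq_zero_off {R : Type*} [NormedRing R] {φ f : α → R} {c : ℝ}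
    (hf : IntegrableOn f s ν) (hφ : AEStronglyMeasurable φ ν) (hbound : ∀ x, ‖φ x‖ ≤ c)
    (hzero : ∀ x ∉ s, φ x = 0) : Integrable (fun x => φ x * f x) ν := by
  have hon : IntegrableOn (fun x => φ x * f x) s ν := hf.bdd_mul hφ.restrict (ae_of_all _ hbound)
  exact hon.integrable_of_forall_notMem_eq_zero fun x hx => by rw [hzero x hx, zero_mul]

theorem integral_sub_indicator_average_mul {φ g : α → ℝ} (hs : MeasurableSet s)
    (hφ : Integrable φ ν) (hφg : Integrable (fun x => φ x * g x) ν) (hg : IntegrableOn g s ν) :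
    ∫ x, (φ x - s.indicator (fun _ => (∫ y, φ y ∂ν) / ν.real s) x) * g x ∂ν =
      ∫ x, φ x * (g x - ⨍ y in s, g y ∂ν) ∂ν := by
  have hindicator : ∀ x, s.indicator (fun _ => (∫ y, φ y ∂ν) / ν.real s) x * g x =
      (∫ y, φ y ∂ν) / ν.real s * s.indicator g x := fun x => by
    by_cases hx : x ∈ s <;> simp [hx]
  simp only [sub_mul, mul_sub, hindicator]
  rw [integral_sub hφg ((hg.integrable_indicator hs).const_mul _),
    integral_sub hφg (hφ.mul_const _), integral_const_mul, integral_mul_const,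
    integral_indicator hs, setAverage_eq, smul_eq_mul, div_eq_mul_inv, mul_assoc]

end Preliminaries

noncomputable section

variable {d : ℕ} {μ : Measure (Euc d)} {n : ℕ}

namespace CubeOf

theorem isClosed_set (Q : CubeOf μ) : IsClosed Q.set := by
  simp only [set, Set.ofPred_forall]
  exact isClosed_iInter fun i => isClosed_le (by fun_prop) continuous_const

theorem measurableSet_set (Q : CubeOf μ) : MeasurableSet Q.set := Q.isClosed_set.measurableSet

theorem center_mem (Q : CubeOf μ) : Q.c ∈ Q.set := fun i => by
  simpa using (half_pos Q.ℓ_pos).le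

theorem ball_subset_set (Q : CubeOf μ) : ball Q.c (Q.ℓ / 2) ⊆ Q.set := fun y hy i => by
  have hcoord : |y i - Q.c i| ≤ dist y Q.c := by
    simpa [dist_eq_norm] using PiLp.norm_apply_le (y - Q.c) i
  exact hcoord.trans (mem_ball.1 hy).le

theorem set_subset_ball (Q : CubeOf μ) : Q.set ⊆ ball Q.c ((d + 1) * Q.ℓ) := fun y hy => by
  have hℓ := Q.ℓ_pos
  rw [mem_ball, EuclideanSpace.dist_eq, Real.sqrt_lt' (by positivity)]
  calc ∑ i, dist (y i) (Q.c i) ^ 2 ≤ ∑ _i : Fin d, Q.ℓ ^ 2 :=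
        Finset.sum_le_sum fun i _ => by
          rw [Real.dist_eq]
          exact pow_le_pow_left₀ (abs_nonneg _) ((hy i).trans (half_le_self hℓ.le)) 2
    _ = d * Q.ℓ ^ 2 := by simp
    _ < (d + 1) ^ 2 * Q.ℓ ^ 2 := by
        gcongr
        nlinarith [Nat.cast_nonneg (α := ℝ) d]
    _ = ((d + 1) * Q.ℓ) ^ 2 := by ring

theorem isCompact_set (Q : CubeOf μ) : IsCompact Q.set :=
  isCompact_of_isClosed_isBounded Q.isClosed_set (isBounded_ball.subset Q.set_subset_ball)

theorem measure_pos (Q : CubeOf μ) : 0 < μ Q.set :=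
  (Q.c_mem (Q.ℓ / 2) (half_pos Q.ℓ_pos)).trans_le (measure_mono Q.ball_subset_set)

theorem set_subset_of_center_dist_le {Q R : CubeOf μ} {r : ℝ}
    (hc : ∀ i, |Q.c i - R.c i| ≤ r / 2) (h : r + Q.ℓ ≤ R.ℓ) : Q.set ⊆ R.set := fun y hy i => by
  linarith [hy i, hc i, abs_sub_le (y i) (Q.c i) (R.c i)]

theorem ℓ_le_of_subset (hd : 0 < d) {Q R : CubeOf μ} (h : Q.set ⊆ R.set) : Q.ℓ ≤ R.ℓ := by
  have hhalf : |Q.ℓ / 2| = Q.ℓ / 2 := abs_of_pos (half_pos Q.ℓ_pos)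
  have hupper : (WithLp.toLp 2 fun i => Q.c i + Q.ℓ / 2 : Euc d) ∈ R.set :=
    h fun i => by simp [hhalf]
  have hlower : (WithLp.toLp 2 fun i => Q.c i - Q.ℓ / 2 : Euc d) ∈ R.set :=
    h fun i => by simp [hhalf]
  have hupper_le := (abs_le.1 (hupper ⟨0, hd⟩)).2
  have hle_lower := (abs_le.1 (hlower ⟨0, hd⟩)).1
  simp only at hupper_le hle_lower
  linarith

theorem dil_two (Q : CubeOf μ) : Q.dil 2 = (Q.pow2 1).set := by
  simp [dil, set, pow2]

theorem pow2_zero (Q : CubeOf μ) : Q.pow2 0 = Q := by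
  simp [pow2]

theorem pow2_pow2 (Q : CubeOf μ) (j k : ℕ) : (Q.pow2 j).pow2 k = Q.pow2 (j + k) := by
  simp only [pow2, CubeOf.mk.injEq, true_and]
  ring

theorem pow2_subset_pow2 (Q : CubeOf μ) {j k : ℕ} (h : j ≤ k) :
    (Q.pow2 j).set ⊆ (Q.pow2 k).set := by
  refine set_subset_of_center_dist_le (r := 0) (fun i => by simp [pow2]) ?_
  rw [zero_add]
  exact mul_le_mul_of_nonneg_right (pow_le_pow_right₀ one_le_two h) Q.ℓ_pos.le

theorem set_subset_pow2 (Q : CubeOf μ) (k : ℕ) : Q.set ⊆ (Q.pow2 k).set := by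
  simpa only [pow2_zero] using Q.pow2_subset_pow2 k.zero_le

theorem set_subset_dil_two (Q : CubeOf μ) : Q.set ⊆ Q.dil 2 := by
  rw [Q.dil_two]
  exact Q.set_subset_pow2 1

theorem le_two_pow_NQR_mul (Q R : CubeOf μ) : R.ℓ ≤ 2 ^ NQR Q R * Q.ℓ := by
  have hne : {k : ℕ | 1 ≤ k ∧ R.ℓ ≤ 2 ^ k * Q.ℓ}.Nonempty := by
    obtain ⟨k, hk⟩ := pow_unbounded_of_one_lt (R.ℓ / Q.ℓ) (one_lt_two (α := ℝ))
    refine ⟨k + 1, by simp, ?_⟩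
    have hle := ((div_lt_iff₀ Q.ℓ_pos).1 hk).le
    rw [pow_succ]
    linarith [R.ℓ_pos]
  exact (Nat.sInf_mem hne).2

theorem two_pow_NQR_mul_le {Q R : CubeOf μ} (h : Q.ℓ ≤ R.ℓ) : 2 ^ NQR Q R * Q.ℓ ≤ 2 * R.ℓ := by
  rcases Nat.lt_or_ge 1 (NQR Q R) with hN | hN
  · have hnot : NQR Q R - 1 ∉ {k : ℕ | 1 ≤ k ∧ R.ℓ ≤ 2 ^ k * Q.ℓ} :=
      Nat.notMem_of_lt_sInf (show NQR Q R - 1 < NQR Q R by omega)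
    have hlt : 2 ^ (NQR Q R - 1) * Q.ℓ < R.ℓ :=
      not_le.1 fun hle => hnot ⟨by omega, hle⟩
    rw [← Nat.sub_add_cancel hN.le, pow_succ]
    linarith
  · calc 2 ^ NQR Q R * Q.ℓ ≤ 2 ^ 1 * Q.ℓ :=
          mul_le_mul_of_nonneg_right (pow_le_pow_right₀ one_le_two hN) Q.ℓ_pos.le
      _ ≤ 2 * R.ℓ := by linarith

/-- The `n`-dimensional density `μ(Q) / l(Q)^n` of `μ` on the cube `Q`, the summand of
`K_{Q,R}`. -/
def density (n : ℕ) (Q : CubeOf μ) : ℝ := μ.real Q.set / Q.ℓ ^ n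

theorem density_nonneg (Q : CubeOf μ) : 0 ≤ Q.density n :=
  div_nonneg measureReal_nonneg (pow_nonneg Q.ℓ_pos.le n)

theorem Kcoef_eq_one_add_sum_density (Q R : CubeOf μ) :
    Kcoef n Q R = 1 + ∑ k ∈ Finset.Icc 1 (NQR Q R), (Q.pow2 k).density n := rfl

theorem one_le_Kcoef (Q R : CubeOf μ) : 1 ≤ Kcoef n Q R :=
  le_add_of_nonneg_right (Finset.sum_nonneg fun k _ => (Q.pow2 k).density_nonneg (n := n))

theorem one_add_sum_density_le_Kcoef_add (Q R : CubeOf μ) :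
    1 + ∑ i ∈ Finset.range (NQR Q R + 1), (Q.pow2 i).density n ≤
      Kcoef n Q R + Q.density n := by
  rw [Kcoef_eq_one_add_sum_density, Finset.sum_range_succ', Finset.range_eq_Ico,
    Finset.sum_Ico_add' (fun i => (Q.pow2 i).density n) 0 (NQR Q R) 1, zero_add,
    Finset.Ico_add_one_right_eq_Icc, pow2_zero, add_assoc]

theorem Kcoef_pow2_le {Q R : CubeOf μ} {j k : ℕ} (hjk : j < k) (h : R.ℓ ≤ 2 ^ k * Q.ℓ) :
    Kcoef n (Q.pow2 j) R ≤ 1 + ∑ i ∈ Finset.range (k + 1), (Q.pow2 i).density n := by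
  have hN : NQR (Q.pow2 j) R ≤ k - j := Nat.sInf_le ⟨by omega, by
    rw [pow2, ← mul_assoc, ← pow_add, Nat.sub_add_cancel hjk.le]
    exact h⟩
  rw [Kcoef_eq_one_add_sum_density]
  gcongr
  calc ∑ i ∈ Finset.Icc 1 (NQR (Q.pow2 j) R), ((Q.pow2 j).pow2 i).density n
    _ ≤ ∑ i ∈ Finset.range (k - j + 1), ((Q.pow2 j).pow2 i).density n :=
      Finset.sum_le_sum_of_subset_of_nonneg
        (fun i hi => by simp only [Finset.mem_Icc, Finset.mem_range] at hi ⊢; omega)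
        fun i _ _ => density_nonneg _
    _ ≤ ∑ i ∈ Finset.range (k + 1), (Q.pow2 i).density n := by
      simp only [pow2_pow2]
      exact sum_range_add_left_le (u := fun i => (Q.pow2 i).density n)
        (fun i => density_nonneg _) (by omega)

theorem Kcoef_le {Q R : CubeOf μ} {k : ℕ} (hk : 0 < k) (h : R.ℓ ≤ 2 ^ k * Q.ℓ) :
    Kcoef n Q R ≤ 1 + ∑ i ∈ Finset.range (k + 1), (Q.pow2 i).density n := by
  simpa only [pow2_zero] using Kcoef_pow2_le (n := n) hk h

theorem pow2_NQR_add_subset (hd : 0 < d) {Q R : CubeOf μ} (h : Q.set ⊆ R.set) (i : ℕ) :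
    (Q.pow2 (NQR Q R + i)).set ⊆ (R.pow2 (i + 2)).set := by
  refine set_subset_of_center_dist_le (h Q.center_mem) ?_
  have hR := R.ℓ_pos
  calc R.ℓ + 2 ^ (NQR Q R + i) * Q.ℓ = R.ℓ + 2 ^ i * (2 ^ NQR Q R * Q.ℓ) := by ring
    _ ≤ 2 ^ i * R.ℓ + 2 ^ i * (2 * R.ℓ) :=
      add_le_add (le_mul_of_one_le_left hR.le (one_le_pow₀ one_le_two))
        (mul_le_mul_of_nonneg_left (two_pow_NQR_mul_le (ℓ_le_of_subset hd h)) (by positivity))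
    _ ≤ 2 ^ (i + 2) * R.ℓ := by
      rw [pow_add]
      linarith [mul_pos (pow_pos two_pos i) hR]

theorem pow2_subset_pow2_NQR_add {Q R : CubeOf μ} (h : Q.set ⊆ R.set) (i : ℕ) :
    (R.pow2 i).set ⊆ (Q.pow2 (NQR Q R + 1 + i)).set := by
  refine set_subset_of_center_dist_le (fun j => by rw [abs_sub_comm]; exact h Q.center_mem j) ?_
  calc R.ℓ + 2 ^ i * R.ℓ ≤ 2 ^ i * R.ℓ + 2 ^ i * R.ℓ := by
        gcongr
        exact le_mul_of_one_le_left R.ℓ_pos.le (one_le_pow₀ one_le_two)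
    _ = 2 * 2 ^ i * R.ℓ := by ring
    _ ≤ 2 * 2 ^ i * (2 ^ NQR Q R * Q.ℓ) := by
        gcongr
        exact le_two_pow_NQR_mul Q R
    _ = 2 ^ (NQR Q R + 1 + i) * Q.ℓ := by ring

end CubeOf

/-- A bound for the sum of the densities of the cubes `Q, 2Q, …, Q̃`, for any cube `Q`: these
densities grow at least geometrically with ratio `βd / 2^n`, and they never exceed
`C₀ (d + 1)^n`. -/
def densitySumConst (d n : ℕ) (C₀ βd : ℝ) : ℝ := C₀ * (d + 1) ^ n * (βd / (βd - 2 ^ n))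

theorem densitySumConst_nonneg (d : ℕ) {C₀ βd : ℝ} (hC₀ : 0 ≤ C₀) (hβ : 2 ^ n < βd) :
    0 ≤ densitySumConst d n C₀ βd := by
  have hβd : 0 ≤ βd := (pow_nonneg zero_le_two n).trans hβ.le
  have := sub_nonneg.2 hβ.le
  rw [densitySumConst]
  positivity

namespace GrowthBound

open CubeOf

variable {C₀ βd : ℝ}

theorem pos (hg : GrowthBound μ n C₀) (Q : CubeOf μ) : 0 < C₀ := by
  simpa using (Q.c_mem 1 one_pos).trans_le (hg Q.c 1 one_pos)

theorem measure_set_le (hg : GrowthBound μ n C₀) (Q : CubeOf μ) :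
    μ Q.set ≤ ENNReal.ofReal (C₀ * ((d + 1) * Q.ℓ) ^ n) :=
  (measure_mono Q.set_subset_ball).trans
    (hg Q.c _ (mul_pos (Nat.cast_add_one_pos d) Q.ℓ_pos))

theorem measure_set_ne_top (hg : GrowthBound μ n C₀) (Q : CubeOf μ) : μ Q.set ≠ ⊤ :=
  ne_top_of_le_ne_top ENNReal.ofReal_ne_top (hg.measure_set_le Q)

theorem measureReal_set_pos (hg : GrowthBound μ n C₀) (Q : CubeOf μ) : 0 < μ.real Q.set :=
  ENNReal.toReal_pos Q.measure_pos.ne' (hg.measure_set_ne_top Q)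

theorem density_le (hg : GrowthBound μ n C₀) (Q : CubeOf μ) :
    Q.density n ≤ C₀ * (d + 1) ^ n := by
  have hℓ := Q.ℓ_pos
  have hC₀ := hg.pos Q
  rw [density, div_le_iff₀ (by positivity), mul_assoc, ← mul_pow]
  exact ENNReal.toReal_le_of_le_ofReal (by positivity) (hg.measure_set_le Q)

theorem density_le_of_subset (hg : GrowthBound μ n C₀) {Q R : CubeOf μ} {c : ℝ}
    (h : Q.set ⊆ R.set) (hℓ : R.ℓ ≤ c * Q.ℓ) : Q.density n ≤ c ^ n * R.density n := by
  have hQ := Q.ℓ_pos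
  have hR := R.ℓ_pos
  rw [density, density, ← mul_div_assoc, div_le_div_iff₀ (by positivity) (by positivity)]
  calc μ.real Q.set * R.ℓ ^ n ≤ μ.real R.set * (c * Q.ℓ) ^ n := by
        gcongr
        exact hg.measure_set_ne_top R
    _ = c ^ n * μ.real R.set * Q.ℓ ^ n := by ring

theorem mul_density_le_of_not_isDoubling (hg : GrowthBound μ n C₀) (hβ : 0 ≤ βd) {Q : CubeOf μ}
    (hQ : ¬ IsDoubling μ 2 βd Q) : βd * Q.density n ≤ 2 ^ n * (Q.pow2 1).density n := by
  have hmeasure : βd * μ.real Q.set ≤ μ.real (Q.pow2 1).set := by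
    rw [IsDoubling, Q.dil_two, not_le] at hQ
    simpa [measureReal_def, hβ] using ENNReal.toReal_mono (hg.measure_set_ne_top _) hQ.le
  have hℓ := Q.ℓ_pos
  calc βd * Q.density n = βd * μ.real Q.set / Q.ℓ ^ n := (mul_div_assoc _ _ _).symm
    _ ≤ μ.real (Q.pow2 1).set / Q.ℓ ^ n := by gcongr
    _ = 2 ^ n * (Q.pow2 1).density n := by
      simp only [density, pow2, pow_one, mul_pow]
      field_simp

theorem exists_isDoubling_pow2 (hg : GrowthBound μ n C₀) (hβ : 2 ^ n < βd) (Q : CubeOf μ) :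
    ∃ N, IsDoubling μ 2 βd (Q.pow2 N) := by
  by_contra! h
  have hpow : (0 : ℝ) < 2 ^ n := by positivity
  have hstep : ∀ k, βd / 2 ^ n * (Q.pow2 k).density n ≤ (Q.pow2 (k + 1)).density n := fun k => by
    rw [div_mul_eq_mul_div, div_le_iff₀' hpow, ← pow2_pow2]
    exact hg.mul_density_le_of_not_isDoubling (hpow.trans hβ).le (h k)
  have hpos : 0 < (Q.pow2 0).density n :=
    div_pos (hg.measureReal_set_pos _) (pow_pos (Q.pow2 0).ℓ_pos n)
  have htendsto := tendsto_atTop_of_geom_le hpos ((one_lt_div hpow).2 hβ) hstep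
  obtain ⟨k, hk⟩ := (htendsto.eventually_gt_atTop (C₀ * (d + 1) ^ n)).exists
  exact hk.not_ge (hg.density_le _)

theorem isDoubling_tilde (hg : GrowthBound μ n C₀) (hβ : 2 ^ n < βd) (Q : CubeOf μ) :
    IsDoubling μ 2 βd (Q.tilde βd) :=
  Nat.sInf_mem (hg.exists_isDoubling_pow2 hβ Q)

theorem sum_density_le (hg : GrowthBound μ n C₀) (hβ : 2 ^ n < βd) (Q : CubeOf μ) {t : ℕ}
    (h : ∀ i < t, ¬ IsDoubling μ 2 βd (Q.pow2 i)) :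
    ∑ i ∈ Finset.range (t + 1), (Q.pow2 i).density n ≤ densitySumConst d n C₀ βd := by
  have hβd : 0 ≤ βd := (pow_nonneg zero_le_two n).trans hβ.le
  have hsum := sub_mul_sum_range_succ_le (u := fun i => (Q.pow2 i).density n)
    (pow_nonneg zero_le_two n) (density_nonneg _) fun i hi => by
      simpa only [pow2_pow2] using hg.mul_density_le_of_not_isDoubling hβd (h i hi)
  rw [densitySumConst, ← mul_div_assoc, le_div_iff₀' (sub_pos.2 hβ), mul_comm _ βd]
  exact hsum.trans (mul_le_mul_of_nonneg_left (hg.density_le _) hβd)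

theorem sum_density_tilde_le (hg : GrowthBound μ n C₀) (hβ : 2 ^ n < βd) (Q : CubeOf μ) :
    ∑ i ∈ Finset.range (tildeIdx μ βd Q + 1), (Q.pow2 i).density n ≤
      densitySumConst d n C₀ βd :=
  hg.sum_density_le hβ Q fun _ hi => Nat.notMem_of_lt_sInf hi

theorem density_le_densitySumConst (hg : GrowthBound μ n C₀) (hβ : 2 ^ n < βd) (Q : CubeOf μ) :
    Q.density n ≤ densitySumConst d n C₀ βd := by
  simpa [pow2_zero] using hg.sum_density_le hβ Q (t := 0) (by simp)

theorem Kcoef_tilde_le (hg : GrowthBound μ n C₀) (hβ : 2 ^ n < βd) (Q : CubeOf μ) :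
    Kcoef n Q (Q.tilde βd) ≤ 1 + 2 * densitySumConst d n C₀ βd := by
  have hℓ : (Q.tilde βd).ℓ ≤ 2 ^ (tildeIdx μ βd Q + 1) * Q.ℓ :=
    mul_le_mul_of_nonneg_right (pow_le_pow_right₀ one_le_two (Nat.le_succ _)) Q.ℓ_pos.le
  have hK := Kcoef_le (n := n) (Nat.succ_pos _) hℓ
  rw [Finset.sum_range_succ] at hK
  linarith [hg.sum_density_tilde_le hβ Q,
    hg.density_le_densitySumConst hβ (Q.pow2 (tildeIdx μ βd Q + 1))]

theorem Kcoef_self_le (hg : GrowthBound μ n C₀) (hβ : 2 ^ n < βd) (Q : CubeOf μ) :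
    Kcoef n Q Q ≤ 1 + 2 * densitySumConst d n C₀ βd := by
  have hK := Kcoef_le (n := n) (Q := Q) (R := Q) one_pos (by linarith [Q.ℓ_pos])
  rw [Finset.sum_range_succ, Finset.sum_range_one] at hK
  linarith [hg.density_le_densitySumConst hβ (Q.pow2 0),
    hg.density_le_densitySumConst hβ (Q.pow2 1)]

end GrowthBound

/-! ### The common doubling dilate of `Q̃` and `R̃` -/

namespace CubeOf

/-- The exponent `s` for which `2^s R` is the cube `hull Q R βd`. The truncated subtraction is
intended: only the part of the chain `Q, 2Q, …, Q̃` beyond the scale of `R` matters. -/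
def hullIdx (Q R : CubeOf μ) (βd : ℝ) : ℕ :=
  let m := max (tildeIdx μ βd R) (tildeIdx μ βd Q - NQR Q R + 2)
  m + tildeIdx μ βd (R.pow2 m)

/-- For `Q ⊆ R`, a doubling dilate of `R` which contains both `Q̃` and `R̃`, and whose
coefficients `K` relative to them are controlled. -/
def hull (Q R : CubeOf μ) (βd : ℝ) : CubeOf μ := R.pow2 (hullIdx Q R βd)

variable {Q R : CubeOf μ} {βd : ℝ}

theorem tildeIdx_le_hullIdx (Q R : CubeOf μ) (βd : ℝ) : tildeIdx μ βd R ≤ hullIdx Q R βd :=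
  (le_max_left _ _).trans (Nat.le_add_right _ _)

theorem tildeIdx_sub_NQR_add_two_le_hullIdx (Q R : CubeOf μ) (βd : ℝ) :
    tildeIdx μ βd Q - NQR Q R + 2 ≤ hullIdx Q R βd :=
  (le_max_right _ _).trans (Nat.le_add_right _ _)

theorem tilde_right_subset_hull (Q R : CubeOf μ) (βd : ℝ) :
    (R.tilde βd).set ⊆ (hull Q R βd).set :=
  R.pow2_subset_pow2 (tildeIdx_le_hullIdx Q R βd)

theorem tilde_left_subset_hull (hd : 0 < d) (h : Q.set ⊆ R.set) :
    (Q.tilde βd).set ⊆ (hull Q R βd).set :=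
  (Q.pow2_subset_pow2 (by omega)).trans
    ((pow2_NQR_add_subset hd h (tildeIdx μ βd Q - NQR Q R)).trans
      (R.pow2_subset_pow2 (tildeIdx_sub_NQR_add_two_le_hullIdx Q R βd)))

end CubeOf

namespace GrowthBound

open CubeOf

variable {C₀ βd : ℝ} {Q R : CubeOf μ}

theorem isDoubling_hull (hg : GrowthBound μ n C₀) (hβ : 2 ^ n < βd) (Q R : CubeOf μ) :
    IsDoubling μ 2 βd (hull Q R βd) := by
  rw [hull, hullIdx, ← pow2_pow2]
  exact hg.isDoubling_tilde hβ _

theorem density_pow2_NQR_add_le (hg : GrowthBound μ n C₀) (hd : 0 < d) (h : Q.set ⊆ R.set)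
    (i : ℕ) :
    (Q.pow2 (NQR Q R + i)).density n ≤ 4 ^ n * (R.pow2 (i + 2)).density n := by
  refine hg.density_le_of_subset (pow2_NQR_add_subset hd h i) ?_
  calc 2 ^ (i + 2) * R.ℓ ≤ 2 ^ (i + 2) * (2 ^ NQR Q R * Q.ℓ) := by
        gcongr
        exact le_two_pow_NQR_mul Q R
    _ = 4 * (2 ^ (NQR Q R + i) * Q.ℓ) := by ring

theorem density_pow2_le_pow2_NQR_add (hg : GrowthBound μ n C₀) (hd : 0 < d)
    (h : Q.set ⊆ R.set) (i : ℕ) :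
    (R.pow2 i).density n ≤ 4 ^ n * (Q.pow2 (NQR Q R + 1 + i)).density n := by
  refine hg.density_le_of_subset (pow2_subset_pow2_NQR_add h i) ?_
  calc 2 ^ (NQR Q R + 1 + i) * Q.ℓ = 2 ^ (i + 1) * (2 ^ NQR Q R * Q.ℓ) := by ring
    _ ≤ 2 ^ (i + 1) * (2 * R.ℓ) :=
        mul_le_mul_of_nonneg_left (two_pow_NQR_mul_le (ℓ_le_of_subset hd h)) (by positivity)
    _ = 4 * (2 ^ i * R.ℓ) := by ring

theorem sum_density_tildeIdx_sub_NQR_le (hg : GrowthBound μ n C₀) (hd : 0 < d)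
    (hβ : 2 ^ n < βd) (h : Q.set ⊆ R.set) :
    ∑ i ∈ Finset.range (tildeIdx μ βd Q - NQR Q R), (R.pow2 i).density n ≤
      4 ^ n * densitySumConst d n C₀ βd := by
  rcases le_total (tildeIdx μ βd Q) (NQR Q R) with hle | hle
  · rw [Nat.sub_eq_zero_of_le hle, Finset.sum_range_zero]
    exact mul_nonneg (by positivity) (densitySumConst_nonneg d (hg.pos Q).le hβ)
  · calc ∑ i ∈ Finset.range (tildeIdx μ βd Q - NQR Q R), (R.pow2 i).density n
      _ ≤ 4 ^ n * ∑ i ∈ Finset.range (tildeIdx μ βd Q - NQR Q R),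
            (Q.pow2 (NQR Q R + 1 + i)).density n := by
        rw [Finset.mul_sum]
        exact Finset.sum_le_sum fun i _ => hg.density_pow2_le_pow2_NQR_add hd h i
      _ ≤ 4 ^ n * ∑ i ∈ Finset.range (tildeIdx μ βd Q + 1), (Q.pow2 i).density n := by
        gcongr
        exact sum_range_add_left_le (u := fun i => (Q.pow2 i).density n)
          (fun i => density_nonneg _) (by omega)
      _ ≤ 4 ^ n * densitySumConst d n C₀ βd := by
        gcongr
        exact hg.sum_density_tilde_le hβ Q

theorem sum_density_hull_le (hg : GrowthBound μ n C₀) (hd : 0 < d) (hβ : 2 ^ n < βd)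
    (h : Q.set ⊆ R.set) :
    ∑ i ∈ Finset.range (hullIdx Q R βd + 1), (R.pow2 i).density n ≤
      (4 + 4 ^ n) * densitySumConst d n C₀ βd := by
  have hmax := sum_range_max_le_add (u := fun i => (R.pow2 i).density n)
    (fun i => density_nonneg _) (tildeIdx μ βd R) (tildeIdx μ βd Q - NQR Q R + 2)
  have hR := hg.sum_density_tilde_le hβ R
  have htail := hg.sum_density_tilde_le hβ
    (R.pow2 (max (tildeIdx μ βd R) (tildeIdx μ βd Q - NQR Q R + 2)))
  simp only [pow2_pow2] at htail
  rw [hullIdx, add_assoc, Finset.sum_range_add]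
  rw [Finset.sum_range_succ] at hR
  rw [Finset.sum_range_succ _ (_ + 1), Finset.sum_range_succ _ (_ - _)] at hmax
  linarith [hg.sum_density_tildeIdx_sub_NQR_le hd hβ h,
    (R.pow2 (tildeIdx μ βd R)).density_nonneg (n := n),
    hg.density_le_densitySumConst hβ (R.pow2 (tildeIdx μ βd Q - NQR Q R)),
    hg.density_le_densitySumConst hβ (R.pow2 (tildeIdx μ βd Q - NQR Q R + 1))]

theorem Kcoef_tilde_right_hull_le (hg : GrowthBound μ n C₀) (hd : 0 < d) (hβ : 2 ^ n < βd)
    (h : Q.set ⊆ R.set) :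
    Kcoef n (R.tilde βd) (hull Q R βd) ≤ 1 + (5 + 4 ^ n) * densitySumConst d n C₀ βd := by
  have hℓ : (hull Q R βd).ℓ ≤ 2 ^ (hullIdx Q R βd + 1) * R.ℓ :=
    mul_le_mul_of_nonneg_right (pow_le_pow_right₀ one_le_two (Nat.le_succ _)) R.ℓ_pos.le
  have hK := Kcoef_pow2_le (n := n) (Nat.lt_succ_of_le (tildeIdx_le_hullIdx Q R βd)) hℓ
  rw [Finset.sum_range_succ] at hK
  rw [tilde]
  linarith [hg.sum_density_hull_le hd hβ h,
    hg.density_le_densitySumConst hβ (R.pow2 (hullIdx Q R βd + 1))]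

theorem sum_density_pow2_NQR_add_le (hg : GrowthBound μ n C₀) (hd : 0 < d) (hβ : 2 ^ n < βd)
    (h : Q.set ⊆ R.set) :
    ∑ i ∈ Finset.range (hullIdx Q R βd), (Q.pow2 (NQR Q R + 1 + i)).density n ≤
      4 ^ n * ((6 + 4 ^ n) * densitySumConst d n C₀ βd) :=
  calc ∑ i ∈ Finset.range (hullIdx Q R βd), (Q.pow2 (NQR Q R + 1 + i)).density n
    _ ≤ 4 ^ n * ∑ i ∈ Finset.range (hullIdx Q R βd), (R.pow2 (3 + i)).density n := by
      rw [Finset.mul_sum]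
      refine Finset.sum_le_sum fun i _ => ?_
      rw [add_assoc, show 3 + i = 1 + i + 2 by ring]
      exact hg.density_pow2_NQR_add_le hd h (1 + i)
    _ ≤ 4 ^ n * ∑ i ∈ Finset.range (hullIdx Q R βd + 3), (R.pow2 i).density n := by
      gcongr
      exact sum_range_add_left_le (u := fun i => (R.pow2 i).density n)
        (fun i => density_nonneg _) (by omega)
    _ ≤ 4 ^ n * ((6 + 4 ^ n) * densitySumConst d n C₀ βd) := by
      gcongr
      rw [Finset.sum_range_succ, Finset.sum_range_succ]
      linarith [hg.sum_density_hull_le hd hβ h,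
        hg.density_le_densitySumConst hβ (R.pow2 (hullIdx Q R βd + 1)),
        hg.density_le_densitySumConst hβ (R.pow2 (hullIdx Q R βd + 2))]

theorem Kcoef_tilde_left_hull_le (hg : GrowthBound μ n C₀) (hd : 0 < d) (hβ : 2 ^ n < βd)
    (h : Q.set ⊆ R.set) :
    Kcoef n (Q.tilde βd) (hull Q R βd) ≤
      Kcoef n Q R + (1 + 4 ^ n * (6 + 4 ^ n)) * densitySumConst d n C₀ βd := by
  have hidx : tildeIdx μ βd Q < NQR Q R + hullIdx Q R βd := by
    have := tildeIdx_sub_NQR_add_two_le_hullIdx Q R βd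
    omega
  have hℓ : (hull Q R βd).ℓ ≤ 2 ^ (NQR Q R + hullIdx Q R βd) * Q.ℓ :=
    calc 2 ^ hullIdx Q R βd * R.ℓ ≤ 2 ^ hullIdx Q R βd * (2 ^ NQR Q R * Q.ℓ) := by
          gcongr
          exact le_two_pow_NQR_mul Q R
      _ = 2 ^ (NQR Q R + hullIdx Q R βd) * Q.ℓ := by ring
  have hK := Kcoef_pow2_le (n := n) hidx hℓ
  rw [add_right_comm, Finset.sum_range_add] at hK
  rw [tilde]
  linarith [one_add_sum_density_le_Kcoef_add (n := n) Q R,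
    hg.density_le_densitySumConst hβ Q, hg.sum_density_pow2_NQR_add_le hd hβ h]

end GrowthBound

/-- The constant in the comparison of the means of an `RBMO` function over `Q̃` and `R̃` with
`K_{Q,R}`, for `Q ⊆ R`. -/
def tildeMeanConst (d n : ℕ) (C₀ βd : ℝ) : ℝ :=
  2 + (1 + 4 ^ n) * (6 + 4 ^ n) * densitySumConst d n C₀ βd

theorem tildeMeanConst_nonneg (d : ℕ) {C₀ βd : ℝ} (hC₀ : 0 ≤ C₀) (hβ : 2 ^ n < βd) :
    0 ≤ tildeMeanConst d n C₀ βd := by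
  have := densitySumConst_nonneg d hC₀ hβ
  rw [tildeMeanConst]
  positivity

theorem GrowthBound.Kcoef_hull_add_Kcoef_hull_le {C₀ βd : ℝ} {Q R : CubeOf μ}
    (hg : GrowthBound μ n C₀) (hd : 0 < d) (hβ : 2 ^ n < βd) (h : Q.set ⊆ R.set) :
    Kcoef n (Q.tilde βd) (Q.hull R βd) + Kcoef n (R.tilde βd) (Q.hull R βd) ≤
      tildeMeanConst d n C₀ βd * Kcoef n Q R := by
  have hG := densitySumConst_nonneg d (hg.pos Q).le hβ
  have hK := Q.one_le_Kcoef R (n := n)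
  calc Kcoef n (Q.tilde βd) (Q.hull R βd) + Kcoef n (R.tilde βd) (Q.hull R βd)
    _ ≤ Kcoef n Q R + (1 + (1 + 4 ^ n) * (6 + 4 ^ n) * densitySumConst d n C₀ βd) * 1 := by
      linarith [hg.Kcoef_tilde_left_hull_le hd hβ h, hg.Kcoef_tilde_right_hull_le hd hβ h]
    _ ≤ Kcoef n Q R +
          (1 + (1 + 4 ^ n) * (6 + 4 ^ n) * densitySumConst d n C₀ βd) * Kcoef n Q R := by gcongr
    _ = tildeMeanConst d n C₀ βd * Kcoef n Q R := by
      rw [tildeMeanConst]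
      ring

/-! ### Testing on atomic blocks -/

/-- The normalisation `μ(2Q) K_{Q,R}` of the atoms supported in `Q` of a block supported in
`R`. -/
def atomWeight (n : ℕ) (Q R : CubeOf μ) : ℝ := μ.real (Q.dil 2) * Kcoef n Q R

/-- The atoms `a` supported in `Q` of which the atomic blocks supported in `R` are built. -/
structure IsBlockAtom (n : ℕ) (Q R : CubeOf μ) (a : Euc d → ℝ) : Prop where
  eq_zero : ∀ x ∉ Q.set, a x = 0
  aestronglyMeasurable : AEStronglyMeasurable a μ
  eLpNorm_le : eLpNorm a ⊤ μ ≤ (μ (Q.dil 2) * ENNReal.ofReal (Kcoef n Q R))⁻¹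

namespace GrowthBound

variable {C₀ βd : ℝ}

theorem measure_dil_two_ne_top (hg : GrowthBound μ n C₀) (Q : CubeOf μ) : μ (Q.dil 2) ≠ ⊤ := by
  rw [Q.dil_two]
  exact hg.measure_set_ne_top _

theorem measureReal_set_le_dil_two (hg : GrowthBound μ n C₀) (Q : CubeOf μ) :
    μ.real Q.set ≤ μ.real (Q.dil 2) :=
  measureReal_mono Q.set_subset_dil_two (hg.measure_dil_two_ne_top Q)

theorem measureReal_dil_two_le (hg : GrowthBound μ n C₀) (hβ : 0 ≤ βd) {Q : CubeOf μ}
    (hQ : IsDoubling μ 2 βd Q) : μ.real (Q.dil 2) ≤ βd * μ.real Q.set := by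
  simpa [measureReal_def, hβ] using ENNReal.toReal_mono
    (ENNReal.mul_ne_top ENNReal.ofReal_ne_top (hg.measure_set_ne_top Q)) hQ

theorem atomWeight_pos (hg : GrowthBound μ n C₀) (Q R : CubeOf μ) : 0 < atomWeight n Q R :=
  mul_pos ((hg.measureReal_set_pos Q).trans_le (hg.measureReal_set_le_dil_two Q))
    (one_pos.trans_le (Q.one_le_Kcoef R))

theorem ofReal_atomWeight (hg : GrowthBound μ n C₀) (Q R : CubeOf μ) :
    ENNReal.ofReal (atomWeight n Q R) = μ (Q.dil 2) * ENNReal.ofReal (Kcoef n Q R) := by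
  rw [atomWeight, ENNReal.ofReal_mul measureReal_nonneg,
    ofReal_measureReal (hg.measure_dil_two_ne_top Q)]

theorem isBlockAtom_inv_atomWeight_mul (hg : GrowthBound μ n C₀) {Q : CubeOf μ} (R : CubeOf μ)
    {ψ : Euc d → ℝ} (hψ : AEStronglyMeasurable ψ μ) (hbound : ∀ x, |ψ x| ≤ 1)
    (hzero : ∀ x ∉ Q.set, ψ x = 0) : IsBlockAtom n Q R fun x => (atomWeight n Q R)⁻¹ * ψ x where
  eq_zero x hx := by rw [hzero x hx, mul_zero]
  aestronglyMeasurable := hψ.const_mul _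
  eLpNorm_le := by
    have hweight := hg.atomWeight_pos Q R
    rw [← hg.ofReal_atomWeight, ← ENNReal.ofReal_inv_of_pos hweight, eLpNorm_exponent_top]
    refine eLpNormEssSup_le_of_ae_bound (ae_of_all _ fun x => ?_)
    rw [Real.norm_eq_abs, abs_mul, abs_of_pos (inv_pos.2 hweight)]
    exact mul_le_of_le_one_right (inv_pos.2 hweight).le (hbound x)

end GrowthBound

namespace AtomicBlock

theorem isBlockAtom (B : AtomicBlock μ n) (j : ℕ) : IsBlockAtom n (B.Qj j) B.R (B.a j) :=
  ⟨B.a_supp j, B.a_meas j, B.a_bound j⟩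

theorem tsum_enorm_lam (B : AtomicBlock μ n) : ∑' j, ‖B.lam j‖ₑ = ENNReal.ofReal B.size := by
  rw [size, ENNReal.ofReal_tsum_of_nonneg (fun _ => abs_nonneg _) B.lam_summable]
  simp only [Real.enorm_eq_ofReal_abs]

/-- The scalar multiple `c • B` of an atomic block, with the coefficients multiplied by `c` and
the same atoms. -/
def smul (c : ℝ) (B : AtomicBlock μ n) : AtomicBlock μ n where
  b x := c * B.b x
  R := B.R
  lam j := c * B.lam j
  a := B.a
  Qj := B.Qj
  integrable := B.integrable.const_mul c
  supp_b x hx := by rw [B.supp_b x hx, mul_zero]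
  int_zero := by rw [integral_const_mul, B.int_zero, mul_zero]
  Qj_sub := B.Qj_sub
  a_supp := B.a_supp
  a_meas := B.a_meas
  a_bound := B.a_bound
  lam_summable := by
    simp only [abs_mul]
    exact B.lam_summable.mul_left _
  b_eq := by
    filter_upwards [B.b_eq] with x hx
    simpa only [mul_assoc] using hx.mul_left c

theorem size_smul (c : ℝ) (B : AtomicBlock μ n) : (B.smul c).size = |c| * B.size := by
  simp only [size, smul, abs_mul, tsum_mul_left]

/-- The atomic block `l₀ a₀ + l₁ a₁` built from two atoms; the remaining coefficients are `0`. -/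
def pair {Q₀ Q₁ R : CubeOf μ} {a₀ a₁ : Euc d → ℝ} (l₀ l₁ : ℝ) (h₀ : IsBlockAtom n Q₀ R a₀)
    (h₁ : IsBlockAtom n Q₁ R a₁) (hQ₀ : Q₀.set ⊆ R.set) (hQ₁ : Q₁.set ⊆ R.set)
    (hint : Integrable (fun x => l₀ * a₀ x + l₁ * a₁ x) μ)
    (hzero : ∫ x, (l₀ * a₀ x + l₁ * a₁ x) ∂μ = 0) : AtomicBlock μ n where
  b x := l₀ * a₀ x + l₁ * a₁ x
  R := R
  lam
    | 0 => l₀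
    | 1 => l₁
    | _ + 2 => 0
  a
    | 0 => a₀
    | _ + 1 => a₁
  Qj
    | 0 => Q₀
    | _ + 1 => Q₁
  integrable := hint
  supp_b x hx := by
    rw [h₀.eq_zero x fun h => hx (hQ₀ h), h₁.eq_zero x fun h => hx (hQ₁ h)]
    simp
  int_zero := hzero
  Qj_sub
    | 0 => hQ₀
    | _ + 1 => hQ₁
  a_supp
    | 0 => h₀.eq_zero
    | _ + 1 => h₁.eq_zero
  a_meas
    | 0 => h₀.aestronglyMeasurable
    | _ + 1 => h₁.aestronglyMeasurable
  a_bound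
    | 0 => h₀.eLpNorm_le
    | _ + 1 => h₁.eLpNorm_le
  lam_summable := (hasSum_of_forall_add_two_eq_zero fun _ => abs_zero).summable
  b_eq := ae_of_all _ fun _ => hasSum_of_forall_add_two_eq_zero fun _ => zero_mul _

theorem size_pair {Q₀ Q₁ R : CubeOf μ} {a₀ a₁ : Euc d → ℝ} {l₀ l₁ : ℝ} (h₀ : IsBlockAtom n Q₀ R a₀)
    (h₁ : IsBlockAtom n Q₁ R a₁) (hQ₀ : Q₀.set ⊆ R.set) (hQ₁ : Q₁.set ⊆ R.set)
    (hint : Integrable (fun x => l₀ * a₀ x + l₁ * a₁ x) μ)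
    (hzero : ∫ x, (l₀ * a₀ x + l₁ * a₁ x) ∂μ = 0) :
    (pair l₀ l₁ h₀ h₁ hQ₀ hQ₁ hint hzero).size = |l₀| + |l₁| :=
  (hasSum_of_forall_add_two_eq_zero fun _ => abs_zero).tsum_eq

end AtomicBlock

/-- The norm of the functional `L_g`, tested on atomic blocks: the supremum of `|∫ b g dμ|` over
the atomic blocks `b` with `|b|_{H^{1,∞}_atb(μ)} ≤ 1`. -/
def blockDualNorm (μ : Measure (Euc d)) (n : ℕ) (g : Euc d → ℝ) : ℝ≥0∞ :=
  ⨆ (B : AtomicBlock μ n) (_ : B.size ≤ 1), ENNReal.ofReal |∫ x, B.b x * g x ∂μ|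

theorem AtomicBlock.ofReal_abs_integral_mul_le (B : AtomicBlock μ n) (g : Euc d → ℝ) {L : ℝ}
    (hL : 0 < L) (hB : B.size ≤ L) :
    ENNReal.ofReal |∫ x, B.b x * g x ∂μ| ≤ ENNReal.ofReal L * blockDualNorm μ n g := by
  have hsize : (B.smul L⁻¹).size ≤ 1 := by
    rw [size_smul, abs_of_pos (inv_pos.2 hL), inv_mul_le_iff₀ hL, mul_one]
    exact hB
  have hintegral : ∫ x, B.b x * g x ∂μ = L * ∫ x, (B.smul L⁻¹).b x * g x ∂μ := by
    simp only [smul, mul_assoc, integral_const_mul, mul_inv_cancel_left₀ hL.ne']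
  rw [hintegral, abs_mul, abs_of_pos hL, ENNReal.ofReal_mul hL.le]
  gcongr
  exact le_iSup₂_of_le (B.smul L⁻¹) hsize le_rfl

/-- The constant in the bound for the oscillation of `g` on `Q` by the norm of `L_g`. -/
def oscillationConst (d n : ℕ) (C₀ βd : ℝ) : ℝ := 1 + βd * (1 + 2 * densitySumConst d n C₀ βd)

theorem oscillationConst_pos (d : ℕ) {C₀ βd : ℝ} (hC₀ : 0 ≤ C₀) (hβ : 2 ^ n < βd) :
    0 < oscillationConst d n C₀ βd := by
  have hβd : 0 < βd := (pow_pos two_pos n).trans hβ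
  have := densitySumConst_nonneg d hC₀ hβ
  rw [oscillationConst]
  positivity

namespace GrowthBound

variable {C₀ βd : ℝ} {Q R : CubeOf μ} {g : Euc d → ℝ}

theorem integrable_of_abs_le_one (hg : GrowthBound μ n C₀) {φ : Euc d → ℝ}
    (hφ : AEStronglyMeasurable φ μ) (hbound : ∀ x, |φ x| ≤ 1) (hzero : ∀ x ∉ Q.set, φ x = 0) :
    Integrable φ μ := by
  simpa only [mul_one] using integrable_mul_of_eq_zero_off (f := fun _ => 1)
    (integrableOn_const (hg.measure_set_ne_top Q)) hφ hbound hzero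

theorem exists_atomicBlock_eq_sub_average (hg : GrowthBound μ n C₀) (hQR : Q.set ⊆ R.set)
    {φ : Euc d → ℝ} (hφ : AEStronglyMeasurable φ μ) (hbound : ∀ x, |φ x| ≤ 1)
    (hzero : ∀ x ∉ Q.set, φ x = 0) :
    ∃ B : AtomicBlock μ n,
      (B.b = fun x => φ x - R.set.indicator (fun _ => (∫ y, φ y ∂μ) / μ.real R.set) x) ∧
      B.size = atomWeight n Q R + |∫ y, φ y ∂μ| / μ.real R.set * atomWeight n R R := by
  set c := (∫ y, φ y ∂μ) / μ.real R.set with hc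
  have hRpos := hg.measureReal_set_pos R
  have hQw := hg.atomWeight_pos Q R
  have hRw := hg.atomWeight_pos R R
  have hφint : Integrable φ μ := hg.integrable_of_abs_le_one hφ hbound hzero
  have hcint : Integrable (R.set.indicator fun _ => c) μ :=
    (integrableOn_const (hg.measure_set_ne_top R)).integrable_indicator R.measurableSet_set
  have hatomQ := hg.isBlockAtom_inv_atomWeight_mul R hφ hbound hzero
  have hatomR := hg.isBlockAtom_inv_atomWeight_mul (Q := R) R (ψ := R.set.indicator 1)
    (aestronglyMeasurable_one.indicator R.measurableSet_set)
    (fun x => by by_cases hx : x ∈ R.set <;> simp [hx])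
    (fun x hx => indicator_of_notMem hx _)
  have hb : (fun x => atomWeight n Q R * ((atomWeight n Q R)⁻¹ * φ x) +
      -(c * atomWeight n R R) * ((atomWeight n R R)⁻¹ * R.set.indicator 1 x)) =
      fun x => φ x - R.set.indicator (fun _ => c) x := by
    funext x
    by_cases hx : x ∈ R.set
    · simp only [indicator_of_mem hx, Pi.one_apply]
      field_simp
      ring
    · simp [hx, hQw.ne']
  refine ⟨AtomicBlock.pair (atomWeight n Q R) (-(c * atomWeight n R R)) hatomQ hatomR hQR
    subset_rfl ?_ ?_, hb, ?_⟩
  · rw [hb]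
    exact hφint.sub hcint
  · rw [hb, integral_sub hφint hcint, integral_indicator_const _ R.measurableSet_set, smul_eq_mul,
      mul_div_cancel₀ _ hRpos.ne', sub_self]
  · rw [AtomicBlock.size_pair, abs_neg, abs_mul, abs_of_pos hQw, abs_of_pos hRw, hc, abs_div,
      abs_of_pos hRpos]

theorem atomWeight_add_le (hg : GrowthBound μ n C₀) (hβ : 2 ^ n < βd)
    (hR : IsDoubling μ 2 βd R) {I : ℝ} (hI : |I| ≤ μ.real Q.set) :
    atomWeight n Q R + |I| / μ.real R.set * atomWeight n R R ≤
      oscillationConst d n C₀ βd * atomWeight n Q R := by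
  have hβd : 0 ≤ βd := (pow_nonneg zero_le_two n).trans hβ.le
  have hG := densitySumConst_nonneg d (hg.pos Q).le hβ
  have hRpos := hg.measureReal_set_pos R
  have hI' : |I| ≤ atomWeight n Q R :=
    (hI.trans (hg.measureReal_set_le_dil_two Q)).trans
      (le_mul_of_one_le_right measureReal_nonneg (Q.one_le_Kcoef R))
  have hRR : atomWeight n R R ≤
      βd * μ.real R.set * (1 + 2 * densitySumConst d n C₀ βd) :=
    mul_le_mul (hg.measureReal_dil_two_le hβd hR) (hg.Kcoef_self_le hβ R)
      (zero_le_one.trans (R.one_le_Kcoef R)) (by positivity)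
  calc atomWeight n Q R + |I| / μ.real R.set * atomWeight n R R
    _ ≤ atomWeight n Q R +
        |I| / μ.real R.set * (βd * μ.real R.set * (1 + 2 * densitySumConst d n C₀ βd)) := by
      gcongr
    _ = atomWeight n Q R + βd * (1 + 2 * densitySumConst d n C₀ βd) * |I| := by field_simp
    _ ≤ atomWeight n Q R + βd * (1 + 2 * densitySumConst d n C₀ βd) * atomWeight n Q R := by
      gcongr
    _ = oscillationConst d n C₀ βd * atomWeight n Q R := by
      rw [oscillationConst]
      ring

theorem ofReal_abs_integral_mul_sub_mQ_le (hg : GrowthBound μ n C₀) (hβ : 2 ^ n < βd)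
    (hQR : Q.set ⊆ R.set) (hR : IsDoubling μ 2 βd R) (hgi : LocallyIntegrable g μ)
    {φ : Euc d → ℝ} (hφ : AEStronglyMeasurable φ μ) (hbound : ∀ x, |φ x| ≤ 1)
    (hzero : ∀ x ∉ Q.set, φ x = 0) :
    ENNReal.ofReal |∫ x, φ x * (g x - mQ μ R g) ∂μ| ≤
      ENNReal.ofReal (oscillationConst d n C₀ βd * atomWeight n Q R) * blockDualNorm μ n g := by
  have hgQ : IntegrableOn g Q.set μ := hgi.integrableOn_isCompact Q.isCompact_set
  have hgR : IntegrableOn g R.set μ := hgi.integrableOn_isCompact R.isCompact_set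
  have hmass : |∫ x, φ x ∂μ| ≤ μ.real Q.set := by
    rw [← setIntegral_eq_integral_of_forall_compl_eq_zero hzero, ← one_mul (μ.real Q.set)]
    exact norm_setIntegral_le_of_norm_le_const (f := φ) (C := 1)
      (hg.measure_set_ne_top Q).lt_top fun x _ => hbound x
  obtain ⟨B, hB, hsize⟩ := hg.exists_atomicBlock_eq_sub_average hQR hφ hbound hzero
  have hintegral := integral_sub_indicator_average_mul R.measurableSet_set
    (hg.integrable_of_abs_le_one hφ hbound hzero)
    (integrable_mul_of_eq_zero_off hgQ hφ hbound hzero) hgR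
  rw [mQ, ← hintegral, ← congrArg (fun b => ∫ x, b x * g x ∂μ) hB]
  exact B.ofReal_abs_integral_mul_le g
    (mul_pos (oscillationConst_pos d (hg.pos Q).le hβ) (hg.atomWeight_pos Q R))
    (hsize.trans_le (hg.atomWeight_add_le hβ hR hmass))

theorem lintegral_abs_sub_mQ_le (hg : GrowthBound μ n C₀) (hβ : 2 ^ n < βd)
    (hQR : Q.set ⊆ R.set) (hR : IsDoubling μ 2 βd R) (hgi : LocallyIntegrable g μ) :
    ∫⁻ x in Q.set, ENNReal.ofReal |g x - mQ μ R g| ∂μ ≤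
      ENNReal.ofReal (oscillationConst d n C₀ βd * atomWeight n Q R) * blockDualNorm μ n g := by
  have hmeas : AEMeasurable (fun x => g x - mQ μ R g) μ :=
    hgi.aestronglyMeasurable.aemeasurable.sub_const _
  have hgQ : IntegrableOn g Q.set μ := hgi.integrableOn_isCompact Q.isCompact_set
  have habs : IntegrableOn (fun x => |g x - mQ μ R g|) Q.set μ :=
    (hgQ.sub (integrableOn_const (hg.measure_set_ne_top Q))).abs
  -- The sign of `g - m_R g` on `Q`; where `g = m_R g` the quotient is `0 / 0 = 0`.
  set φ : Euc d → ℝ := Q.set.indicator fun x => (g x - mQ μ R g) / |g x - mQ μ R g| with hφ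
  have hφmeas : AEStronglyMeasurable φ μ :=
    (hmeas.div hmeas.abs).aestronglyMeasurable.indicator Q.measurableSet_set
  have hφbound : ∀ x, |φ x| ≤ 1 := fun x => by
    by_cases hx : x ∈ Q.set
    · simpa [hφ, hx, abs_div] using div_self_le_one |g x - mQ μ R g|
    · simp [hφ, hx]
  have hφmul : ∀ x, φ x * (g x - mQ μ R g) =
      Q.set.indicator (fun x => |g x - mQ μ R g|) x := fun x => by
    by_cases hx : x ∈ Q.set
    · rw [hφ, indicator_of_mem hx, indicator_of_mem hx, div_mul_eq_mul_div,
        ← abs_mul_abs_self, mul_self_div_self]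
    · simp [hφ, hx]
  have hintegral : ∫ x, φ x * (g x - mQ μ R g) ∂μ = ∫ x in Q.set, |g x - mQ μ R g| ∂μ := by
    simp only [hφmul]
    exact integral_indicator Q.measurableSet_set
  calc ∫⁻ x in Q.set, ENNReal.ofReal |g x - mQ μ R g| ∂μ
    _ = ENNReal.ofReal |∫ x, φ x * (g x - mQ μ R g) ∂μ| := by
      rw [hintegral, abs_of_nonneg (integral_nonneg fun _ => abs_nonneg _),
        ofReal_integral_eq_lintegral_ofReal habs (ae_of_all _ fun _ => abs_nonneg _)]
    _ ≤ _ := hg.ofReal_abs_integral_mul_sub_mQ_le hβ hQR hR hgi hφmeas hφbound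
      fun x hx => indicator_of_notMem hx _

end GrowthBound

/-- The constant in the bound for the `RBMO` norm of `g` by the norm of `L_g`. -/
def rbmoBoundConst (d n : ℕ) (C₀ βd : ℝ) : ℝ :=
  oscillationConst d n C₀ βd * (1 + 2 * densitySumConst d n C₀ βd + βd)

namespace GrowthBound

variable {C₀ βd : ℝ} {Q R : CubeOf μ} {g : Euc d → ℝ}

theorem lintegral_abs_sub_mQ_tilde_le (hg : GrowthBound μ n C₀) (hβ : 2 ^ n < βd)
    (hgi : LocallyIntegrable g μ) (Q : CubeOf μ) :
    ∫⁻ x in Q.set, ENNReal.ofReal |g x - mQ μ (Q.tilde βd) g| ∂μ ≤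
      ENNReal.ofReal (rbmoBoundConst d n C₀ βd) * blockDualNorm μ n g * μ (Q.dil 2) := by
  have hβd : 0 ≤ βd := (pow_nonneg zero_le_two n).trans hβ.le
  have := densitySumConst_nonneg d (hg.pos Q).le hβ
  have hosc := oscillationConst_pos d (hg.pos Q).le hβ
  have hweight : oscillationConst d n C₀ βd * atomWeight n Q (Q.tilde βd) ≤
      rbmoBoundConst d n C₀ βd * μ.real (Q.dil 2) := by
    rw [rbmoBoundConst, mul_assoc, atomWeight, mul_comm (μ.real _)]
    gcongr
    linarith [hg.Kcoef_tilde_le hβ Q]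
  calc ∫⁻ x in Q.set, ENNReal.ofReal |g x - mQ μ (Q.tilde βd) g| ∂μ
    _ ≤ ENNReal.ofReal (rbmoBoundConst d n C₀ βd * μ.real (Q.dil 2)) * blockDualNorm μ n g :=
      (hg.lintegral_abs_sub_mQ_le hβ (Q.set_subset_pow2 _) (hg.isDoubling_tilde hβ Q) hgi).trans
        (mul_le_mul_left (ENNReal.ofReal_le_ofReal hweight) _)
    _ = ENNReal.ofReal (rbmoBoundConst d n C₀ βd) * blockDualNorm μ n g * μ (Q.dil 2) := by
      rw [ENNReal.ofReal_mul' measureReal_nonneg,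
        ofReal_measureReal (hg.measure_dil_two_ne_top Q), mul_right_comm]

theorem ofReal_abs_mQ_sub_mQ_le (hg : GrowthBound μ n C₀) (hβ : 2 ^ n < βd)
    (hgi : LocallyIntegrable g μ) (hQR : Q.set ⊆ R.set) (hQ : IsDoubling μ 2 βd Q)
    (hR : IsDoubling μ 2 βd R) :
    ENNReal.ofReal |mQ μ Q g - mQ μ R g| ≤
      ENNReal.ofReal (rbmoBoundConst d n C₀ βd) * blockDualNorm μ n g *
        ENNReal.ofReal (Kcoef n Q R) := by
  have hβd : 0 ≤ βd := (pow_nonneg zero_le_two n).trans hβ.le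
  have hG := densitySumConst_nonneg d (hg.pos Q).le hβ
  have hosc := oscillationConst_pos d (hg.pos Q).le hβ
  have hK := zero_le_one.trans (Q.one_le_Kcoef R (n := n))
  have hQtop := hg.measure_set_ne_top Q
  have hweight : oscillationConst d n C₀ βd * atomWeight n Q R ≤
      rbmoBoundConst d n C₀ βd * Kcoef n Q R * μ.real Q.set := by
    calc oscillationConst d n C₀ βd * atomWeight n Q R
      _ ≤ oscillationConst d n C₀ βd * (βd * μ.real Q.set * Kcoef n Q R) := by
        rw [atomWeight]
        gcongr
        exact hg.measureReal_dil_two_le hβd hQ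
      _ = oscillationConst d n C₀ βd * βd * Kcoef n Q R * μ.real Q.set := by ring
      _ ≤ rbmoBoundConst d n C₀ βd * Kcoef n Q R * μ.real Q.set := by
        rw [rbmoBoundConst]
        gcongr
        linarith
  rw [← ENNReal.mul_le_mul_iff_left Q.measure_pos.ne' hQtop]
  calc ENNReal.ofReal |mQ μ Q g - mQ μ R g| * μ Q.set
    _ ≤ ∫⁻ x in Q.set, ENNReal.ofReal |g x - mQ μ R g| ∂μ := by
      simp only [← Real.enorm_eq_ofReal_abs]
      exact enorm_setAverage_sub_mul_le hQtop (hgi.integrableOn_isCompact Q.isCompact_set) _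
    _ ≤ ENNReal.ofReal (rbmoBoundConst d n C₀ βd * Kcoef n Q R * μ.real Q.set) *
          blockDualNorm μ n g :=
      (hg.lintegral_abs_sub_mQ_le hβ hQR hR hgi).trans
        (mul_le_mul_left (ENNReal.ofReal_le_ofReal hweight) _)
    _ = ENNReal.ofReal (rbmoBoundConst d n C₀ βd) * blockDualNorm μ n g *
          ENNReal.ofReal (Kcoef n Q R) * μ Q.set := by
      rw [ENNReal.ofReal_mul' measureReal_nonneg, ENNReal.ofReal_mul' hK,
        ofReal_measureReal hQtop]
      ring

theorem rbmoBoundWith_blockDualNorm (hg : GrowthBound μ n C₀) (hβ : 2 ^ n < βd)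
    (hgi : LocallyIntegrable g μ) :
    RBMOBoundWith μ n βd g
      (ENNReal.ofReal (rbmoBoundConst d n C₀ βd) * blockDualNorm μ n g) :=
  ⟨hg.lintegral_abs_sub_mQ_tilde_le hβ hgi,
    fun _ _ hQR hQ hR => hg.ofReal_abs_mQ_sub_mQ_le hβ hgi hQR hQ hR⟩

end GrowthBound

/-! ### Pairing atomic blocks with `RBMO` functions -/

namespace RBMOBoundWith

variable {C₀ βd : ℝ} {Q R : CubeOf μ} {g : Euc d → ℝ} {C : ℝ≥0∞}

theorem ofReal_abs_mQ_tilde_sub_mQ_tilde_le (hC : RBMOBoundWith μ n βd g C)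
    (hg : GrowthBound μ n C₀) (hd : 0 < d) (hβ : 2 ^ n < βd) (h : Q.set ⊆ R.set) :
    ENNReal.ofReal |mQ μ (Q.tilde βd) g - mQ μ (R.tilde βd) g| ≤
      C * ENNReal.ofReal (tildeMeanConst d n C₀ βd * Kcoef n Q R) := by
  have hP := hg.isDoubling_hull hβ Q R
  have hQP := hC.2 _ _ (CubeOf.tilde_left_subset_hull hd h) (hg.isDoubling_tilde hβ Q) hP
  have hRP := hC.2 _ _ (CubeOf.tilde_right_subset_hull Q R βd) (hg.isDoubling_tilde hβ R) hP
  have hKQ := zero_le_one.trans ((Q.tilde βd).one_le_Kcoef (Q.hull R βd) (n := n))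
  have hKR := zero_le_one.trans ((R.tilde βd).one_le_Kcoef (Q.hull R βd) (n := n))
  rw [abs_sub_comm] at hRP
  calc ENNReal.ofReal |mQ μ (Q.tilde βd) g - mQ μ (R.tilde βd) g|
    _ ≤ C * ENNReal.ofReal (Kcoef n (Q.tilde βd) (Q.hull R βd)) +
          C * ENNReal.ofReal (Kcoef n (R.tilde βd) (Q.hull R βd)) :=
      (ofReal_abs_sub_le _ _ _).trans (add_le_add hQP hRP)
    _ = C * ENNReal.ofReal (Kcoef n (Q.tilde βd) (Q.hull R βd) +
          Kcoef n (R.tilde βd) (Q.hull R βd)) := by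
      rw [← mul_add, ENNReal.ofReal_add hKQ hKR]
    _ ≤ C * ENNReal.ofReal (tildeMeanConst d n C₀ βd * Kcoef n Q R) := by
      gcongr
      exact hg.Kcoef_hull_add_Kcoef_hull_le hd hβ h

theorem lintegral_abs_sub_mQ_tilde_le (hC : RBMOBoundWith μ n βd g C) (hg : GrowthBound μ n C₀)
    (hd : 0 < d) (hβ : 2 ^ n < βd) (h : Q.set ⊆ R.set) :
    ∫⁻ x in Q.set, ENNReal.ofReal |g x - mQ μ (R.tilde βd) g| ∂μ ≤
      ENNReal.ofReal (atomWeight n Q R) *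
        (ENNReal.ofReal (1 + tildeMeanConst d n C₀ βd) * C) := by
  have hD := tildeMeanConst_nonneg d (hg.pos Q).le hβ
  have hdil : μ Q.set ≤ μ (Q.dil 2) := measure_mono Q.set_subset_dil_two
  calc ∫⁻ x in Q.set, ENNReal.ofReal |g x - mQ μ (R.tilde βd) g| ∂μ
    _ ≤ ∫⁻ x in Q.set, (ENNReal.ofReal |g x - mQ μ (Q.tilde βd) g| +
          ENNReal.ofReal |mQ μ (Q.tilde βd) g - mQ μ (R.tilde βd) g|) ∂μ :=
      lintegral_mono fun x => ofReal_abs_sub_le _ _ _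
    _ = ∫⁻ x in Q.set, ENNReal.ofReal |g x - mQ μ (Q.tilde βd) g| ∂μ +
          ENNReal.ofReal |mQ μ (Q.tilde βd) g - mQ μ (R.tilde βd) g| * μ Q.set := by
      rw [lintegral_add_right _ measurable_const, setLIntegral_const]
    _ ≤ C * μ (Q.dil 2) +
          C * ENNReal.ofReal (tildeMeanConst d n C₀ βd * Kcoef n Q R) * μ (Q.dil 2) := by
      gcongr
      · exact hC.1 Q
      · exact hC.ofReal_abs_mQ_tilde_sub_mQ_tilde_le hg hd hβ h
    _ ≤ C * (μ (Q.dil 2) * ENNReal.ofReal (Kcoef n Q R)) +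
          C * ENNReal.ofReal (tildeMeanConst d n C₀ βd * Kcoef n Q R) * μ (Q.dil 2) := by
      gcongr
      exact le_mul_of_one_le_right zero_le (ENNReal.one_le_ofReal.2 (Q.one_le_Kcoef R))
    _ = ENNReal.ofReal (atomWeight n Q R) *
          (ENNReal.ofReal (1 + tildeMeanConst d n C₀ βd) * C) := by
      rw [hg.ofReal_atomWeight, ENNReal.ofReal_mul hD, ENNReal.ofReal_add zero_le_one hD,
        ENNReal.ofReal_one]
      ring

theorem lintegral_enorm_atom_mul_le (hC : RBMOBoundWith μ n βd g C) (hg : GrowthBound μ n C₀)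
    (hd : 0 < d) (hβ : 2 ^ n < βd) (h : Q.set ⊆ R.set) {a : Euc d → ℝ}
    (ha : IsBlockAtom n Q R a) :
    ∫⁻ x, ‖a x * (g x - mQ μ (R.tilde βd) g)‖ₑ ∂μ ≤
      ENNReal.ofReal (1 + tildeMeanConst d n C₀ βd) * C := by
  have hpos : ENNReal.ofReal (atomWeight n Q R) ≠ 0 :=
    (ENNReal.ofReal_pos.2 (hg.atomWeight_pos Q R)).ne'
  have hbound : ∀ᵐ x ∂μ, ‖a x‖ₑ ≤ (ENNReal.ofReal (atomWeight n Q R))⁻¹ := by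
    filter_upwards [enorm_ae_le_eLpNormEssSup a μ] with x hx
    rw [hg.ofReal_atomWeight]
    exact hx.trans (eLpNorm_exponent_top.symm.trans_le ha.eLpNorm_le)
  calc ∫⁻ x, ‖a x * (g x - mQ μ (R.tilde βd) g)‖ₑ ∂μ
    _ ≤ ∫⁻ x in Q.set, (ENNReal.ofReal (atomWeight n Q R))⁻¹ *
          ENNReal.ofReal |g x - mQ μ (R.tilde βd) g| ∂μ := by
      rw [← lintegral_indicator Q.measurableSet_set]
      refine lintegral_mono_ae ?_
      filter_upwards [hbound] with x hx
      by_cases hxQ : x ∈ Q.set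
      · rw [indicator_of_mem hxQ, enorm_mul, ← Real.enorm_eq_ofReal_abs]
        gcongr
      · simp [ha.eq_zero x hxQ]
    _ ≤ (ENNReal.ofReal (atomWeight n Q R))⁻¹ * (ENNReal.ofReal (atomWeight n Q R) *
          (ENNReal.ofReal (1 + tildeMeanConst d n C₀ βd) * C)) := by
      rw [lintegral_const_mul' _ _ (ENNReal.inv_ne_top.2 hpos)]
      gcongr
      exact hC.lintegral_abs_sub_mQ_tilde_le hg hd hβ h
    _ = ENNReal.ofReal (1 + tildeMeanConst d n C₀ βd) * C :=
      ENNReal.inv_mul_cancel_left' (fun h0 => absurd h0 hpos)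
        fun htop => absurd htop ENNReal.ofReal_ne_top

theorem lintegral_enorm_atomicBlock_mul_le (hC : RBMOBoundWith μ n βd g C)
    (hg : GrowthBound μ n C₀) (hd : 0 < d) (hβ : 2 ^ n < βd) (hgm : AEStronglyMeasurable g μ)
    (B : AtomicBlock μ n) :
    ∫⁻ x, ‖B.b x * (g x - mQ μ (B.R.tilde βd) g)‖ₑ ∂μ ≤
      ENNReal.ofReal B.size * (ENNReal.ofReal (1 + tildeMeanConst d n C₀ βd) * C) := by
  set cR := mQ μ (B.R.tilde βd) g
  have hmeas : ∀ j, AEMeasurable (fun x => ‖B.lam j‖ₑ * ‖B.a j x * (g x - cR)‖ₑ) μ := fun j =>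
    ((B.a_meas j).mul (hgm.sub aestronglyMeasurable_const)).enorm.const_mul _
  calc ∫⁻ x, ‖B.b x * (g x - cR)‖ₑ ∂μ
    _ ≤ ∫⁻ x, ∑' j, ‖B.lam j‖ₑ * ‖B.a j x * (g x - cR)‖ₑ ∂μ := by
      refine lintegral_mono_ae ?_
      filter_upwards [B.b_eq] with x hx
      rw [← (hx.mul_right (g x - cR)).tsum_eq]
      refine enorm_tsum_le_tsum_enorm.trans_eq (tsum_congr fun j => ?_)
      rw [mul_assoc, enorm_mul]
    _ = ∑' j, ‖B.lam j‖ₑ * ∫⁻ x, ‖B.a j x * (g x - cR)‖ₑ ∂μ := by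
      rw [lintegral_tsum hmeas]
      exact tsum_congr fun j => lintegral_const_mul' _ _ enorm_ne_top
    _ ≤ ∑' j, ‖B.lam j‖ₑ * (ENNReal.ofReal (1 + tildeMeanConst d n C₀ βd) * C) := by
      gcongr with j
      exact hC.lintegral_enorm_atom_mul_le hg hd hβ (B.Qj_sub j) (B.isBlockAtom j)
    _ = ENNReal.ofReal B.size * (ENNReal.ofReal (1 + tildeMeanConst d n C₀ βd) * C) := by
      rw [ENNReal.tsum_mul_right, B.tsum_enorm_lam]

theorem integral_atomicBlock_mul_eq (hC : RBMOBoundWith μ n βd g C) (hg : GrowthBound μ n C₀)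
    (hd : 0 < d) (hβ : 2 ^ n < βd) (hgm : AEStronglyMeasurable g μ) (hCtop : C ≠ ⊤)
    (B : AtomicBlock μ n) :
    ∫ x, B.b x * g x ∂μ = ∫ x, B.b x * (g x - mQ μ (B.R.tilde βd) g) ∂μ := by
  have hsub : Integrable (fun x => B.b x * (g x - mQ μ (B.R.tilde βd) g)) μ :=
    ⟨B.integrable.aestronglyMeasurable.mul (hgm.sub aestronglyMeasurable_const),
      (hC.lintegral_enorm_atomicBlock_mul_le hg hd hβ hgm B).trans_lt
        (ENNReal.mul_lt_top ENNReal.ofReal_lt_top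
          (ENNReal.mul_lt_top ENNReal.ofReal_lt_top hCtop.lt_top))⟩
  have hsplit : ∀ x, B.b x * g x = B.b x * (g x - mQ μ (B.R.tilde βd) g) +
      B.b x * mQ μ (B.R.tilde βd) g := fun x => by ring
  simp only [hsplit]
  rw [integral_add hsub (B.integrable.mul_const _), integral_mul_const, B.int_zero, zero_mul,
    add_zero]

theorem blockDualNorm_le (hC : RBMOBoundWith μ n βd g C) (hg : GrowthBound μ n C₀) (hd : 0 < d)
    (hβ : 2 ^ n < βd) (hgm : AEStronglyMeasurable g μ) :
    blockDualNorm μ n g ≤ ENNReal.ofReal (1 + tildeMeanConst d n C₀ βd) * C := by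
  refine iSup₂_le fun B hB => ?_
  have hD := tildeMeanConst_nonneg d (hg.pos B.R).le hβ
  rcases eq_or_ne C ⊤ with rfl | hCtop
  · rw [ENNReal.mul_top (ENNReal.ofReal_pos.2 (by linarith)).ne']
    exact le_top
  calc ENNReal.ofReal |∫ x, B.b x * g x ∂μ|
    _ = ‖∫ x, B.b x * (g x - mQ μ (B.R.tilde βd) g) ∂μ‖ₑ := by
      rw [hC.integral_atomicBlock_mul_eq hg hd hβ hgm hCtop B, Real.enorm_eq_ofReal_abs]
    _ ≤ ∫⁻ x, ‖B.b x * (g x - mQ μ (B.R.tilde βd) g)‖ₑ ∂μ := enorm_integral_le_lintegral_enorm _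
    _ ≤ ENNReal.ofReal B.size * (ENNReal.ofReal (1 + tildeMeanConst d n C₀ βd) * C) :=
      hC.lintegral_enorm_atomicBlock_mul_le hg hd hβ hgm B
    _ ≤ ENNReal.ofReal (1 + tildeMeanConst d n C₀ βd) * C :=
      mul_le_of_le_one_left zero_le (ENNReal.ofReal_le_one.2 hB)

end RBMOBoundWith

namespace GrowthBound

variable {C₀ βd : ℝ} {g : Euc d → ℝ}

theorem rbmoNorm_le_mul_blockDualNorm (hg : GrowthBound μ n C₀) (hβ : 2 ^ n < βd)
    (hgi : LocallyIntegrable g μ) :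
    rbmoNorm μ n βd g ≤ ENNReal.ofReal (rbmoBoundConst d n C₀ βd) * blockDualNorm μ n g :=
  sInf_le (hg.rbmoBoundWith_blockDualNorm hβ hgi)

theorem blockDualNorm_le_mul_rbmoNorm (hg : GrowthBound μ n C₀) (hd : 0 < d) (hC₀ : 0 ≤ C₀)
    (hβ : 2 ^ n < βd) (hgm : AEStronglyMeasurable g μ) :
    blockDualNorm μ n g ≤
      ENNReal.ofReal (1 + tildeMeanConst d n C₀ βd) * rbmoNorm μ n βd g := by
  have hD := tildeMeanConst_nonneg d hC₀ hβ
  rw [rbmoNorm, sInf_eq_iInf', ENNReal.mul_iInf_of_ne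
    (ENNReal.ofReal_pos.2 (by linarith)).ne' ENNReal.ofReal_ne_top]
  exact le_iInf fun C => RBMOBoundWith.blockDualNorm_le C.2 hg hd hβ hgm

end GrowthBound

end

theorem statement9_general (d n : ℕ) (hd : 0 < d) (C₀ βd : ℝ) (hC₀ : 0 < C₀)
    (hβ : (2 : ℝ) ^ n < βd) :
    ∃ C : ℝ, 0 < C ∧ ∀ μ : Measure (Euc d), GrowthBound μ n C₀ →
      ∀ g : Euc d → ℝ, LocallyIntegrable g μ →
        rbmoNorm μ n βd g ≤ ENNReal.ofReal C * blockDualNorm μ n g ∧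
        blockDualNorm μ n g ≤ ENNReal.ofReal C * rbmoNorm μ n βd g := by
  have hD := tildeMeanConst_nonneg d hC₀.le hβ
  refine ⟨max (rbmoBoundConst d n C₀ βd) (1 + tildeMeanConst d n C₀ βd),
    lt_max_of_lt_right (by linarith), fun μ hg g hgi => ⟨?_, ?_⟩⟩
  · exact (hg.rbmoNorm_le_mul_blockDualNorm hβ hgi).trans
      (mul_le_mul_left (ENNReal.ofReal_le_ofReal (le_max_left _ _)) _)
  · exact (hg.blockDualNorm_le_mul_rbmoNorm hd hC₀.le hβ hgi.aestronglyMeasurable).trans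
      (mul_le_mul_left (ENNReal.ofReal_le_ofReal (le_max_right _ _)) _)

/-- Lemma 4.5: for `g ∈ RBMO(μ)`, the norm of the functional `L_g` on
`H^{1,∞}_atb(μ)` is comparable to `‖g‖_*`. -/
theorem statement9 (d n : ℕ) (hn : 1 ≤ n) (hnd : n ≤ d) (C₀ βd : ℝ)
    (hC₀ : 0 < C₀) (hβ : (2 : ℝ) ^ n < βd) :
    ∃ C : ℝ, 0 < C ∧ ∀ μ : MeasureTheory.Measure (Euc d), GrowthBound μ n C₀ →
      SmallDoublingAE μ βd →
      ∀ g : Euc d → ℝ, MeasureTheory.LocallyIntegrable g μ → rbmoNorm μ n βd g < ⊤ →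
        rbmoNorm μ n βd g ≤ ENNReal.ofReal C *
          (⨆ (B : AtomicBlock μ n) (_ : B.size ≤ 1),
            ENNReal.ofReal |∫ x, B.b x * g x ∂μ|) ∧
        (⨆ (B : AtomicBlock μ n) (_ : B.size ≤ 1),
            ENNReal.ofReal |∫ x, B.b x * g x ∂μ|) ≤
          ENNReal.ofReal C * rbmoNorm μ n βd g := by
  obtain ⟨C, hC, hcomparable⟩ := statement9_general d n (hn.trans hnd) C₀ βd hC₀ hβ
  exact ⟨C, hC, fun μ hg _ g hgi _ => hcomparable μ hg g hgi⟩
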